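/- arXiv:2009.13107 — 4 statements merged into one kernel-verified Lean document; each statement's English description precedes it below -/
import Mathlib

section
/- Let r ≥ 1 and let a : Fin r → Fin r → Fin r → Fin r → ℂ be any family of complex numbers. For j, k ∈ Fin r, let M(j,k) denote the r×r matrix whose (λ,μ)-entry is a j k λ μ. Then Σ_{σ,ρ,μ ∈ S_r} sign(σ)·sign(ρ)·sign(μ)·Π_{i=1}^{r} a (ρ(i)) (μ(i)) i (σ(i)) = r! · Σ_{τ ∈ S_r} sign(τ)·D(M(1,τ(1)), …, M(r,τ(r))). -/
open Matrix

/-- The mixed discriminant of r×r complex matrices A₁,…,A_r: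
`(1/r!)·Σ_{σ∈S_r} det(B_σ)` where `B_σ` has (i,k)-entry `(A_{σ(i)})_{i,k}`. -/
noncomputable def mixedDiscriminant {r : ℕ} (A : Fin r → Matrix (Fin r) (Fin r) ℂ) : ℂ :=
  (1 / (r.factorial : ℂ)) *
    ∑ σ : Equiv.Perm (Fin r), (Matrix.of fun i k => A (σ i) i k).det

theorem det_eq_double_mixed_discriminant_coordinates
    (r : ℕ) (hr : 1 ≤ r) (a : Fin r → Fin r → Fin r → Fin r → ℂ) :
    (∑ σ : Equiv.Perm (Fin r), ∑ ρ : Equiv.Perm (Fin r), ∑ μ : Equiv.Perm (Fin r),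
        ((Equiv.Perm.sign σ : ℤ) : ℂ) * ((Equiv.Perm.sign ρ : ℤ) : ℂ) *
          ((Equiv.Perm.sign μ : ℤ) : ℂ) * ∏ i : Fin r, a (ρ i) (μ i) i (σ i)) =
      (r.factorial : ℂ) *
        ∑ τ : Equiv.Perm (Fin r),
          ((Equiv.Perm.sign τ : ℤ) : ℂ) *
            mixedDiscriminant (fun i => Matrix.of fun lam mu => a i (τ i) lam mu) := by
  have hf : (r.factorial : ℂ) ≠ 0 := by exact_mod_cast r.factorial_ne_zero
  have key : ∀ τ ρ : Equiv.Perm (Fin r),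
      (Matrix.of fun i k => a (ρ i) (τ (ρ i)) i k : Matrix (Fin r) (Fin r) ℂ).det
        = ∑ σ : Equiv.Perm (Fin r), ((Equiv.Perm.sign σ : ℤ) : ℂ) *
            ∏ i : Fin r, a (ρ i) (τ (ρ i)) i (σ i) := by
    intro τ ρ
    rw [← Matrix.det_transpose, Matrix.det_apply']
    rfl
  have h1 : (r.factorial : ℂ) *
        ∑ τ : Equiv.Perm (Fin r),
          ((Equiv.Perm.sign τ : ℤ) : ℂ) *
            mixedDiscriminant (fun i => Matrix.of fun lam mu => a i (τ i) lam mu)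
      = ∑ τ : Equiv.Perm (Fin r), ∑ ρ : Equiv.Perm (Fin r), ∑ σ : Equiv.Perm (Fin r),
          ((Equiv.Perm.sign τ : ℤ) : ℂ) * (((Equiv.Perm.sign σ : ℤ) : ℂ) *
            ∏ i : Fin r, a (ρ i) (τ (ρ i)) i (σ i)) := by
    rw [Finset.mul_sum]
    refine Finset.sum_congr rfl fun τ _ => ?_
    simp only [mixedDiscriminant, Matrix.of_apply, key]
    simp only [← Finset.mul_sum]
    field_simp
  rw [h1, Finset.sum_comm]
  refine Eq.trans ?_ Finset.sum_comm
  refine Finset.sum_congr rfl fun ρ _ => ?_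
  refine Eq.trans ?_ Finset.sum_comm
  refine Finset.sum_congr rfl fun σ _ => ?_
  refine Fintype.sum_equiv (Equiv.mulRight ρ⁻¹) _ _ fun μ => ?_
  have hinv : ∀ i, ρ⁻¹ (ρ i) = i := fun i => ρ.symm_apply_apply i
  simp only [Equiv.coe_mulRight, Equiv.Perm.sign_mul, Equiv.Perm.sign_inv, Equiv.Perm.mul_apply,
    hinv, Units.val_mul, Int.cast_mul]
  ring
end

section
/- Let n ≥ r ≥ 1, let M be a ℂ-module, let v : Fin n → M be any family of elements, and let a : Fin n → Fin n → Fin r → Fin r → ℂ be any family of complex numbers. Then, in the r-th exterior power ⋀[ℂ]^r M, Σ_{σ,μ ∈ S_r} sign(σ)·sign(μ) · (w₁^{σ,μ} ∧ ⋯ ∧ w_r^{σ,μ}) = Σ_{σ,μ ∈ S_r} sign(σ)·sign(μ) · (u₁^{σ,μ} ∧ ⋯ ∧ u_r^{σ,μ}), where w_i^{σ,μ} := Σ_{k=1}^{n} a (μ(i)) k i (σ(i)) · v_k and u_i^{σ,μ} := Σ_{k=1}^{n} a i k (σ(i)) (μ(i)) · v_k. -/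
open Matrix

theorem exterior_power_curvature_tensor_identity
    (n r : ℕ) (hr : 1 ≤ r) (hrn : r ≤ n)
    (M : Type*) [AddCommGroup M] [Module ℂ M]
    (v : Fin n → M) (a : Fin n → Fin n → Fin r → Fin r → ℂ) :
    (∑ σ : Equiv.Perm (Fin r), ∑ μ : Equiv.Perm (Fin r),
        (((Equiv.Perm.sign σ : ℤ) * (Equiv.Perm.sign μ : ℤ) : ℤ) : ℂ) •
          ExteriorAlgebra.ιMulti ℂ r (fun i => ∑ k : Fin n, a (Fin.castLE hrn (μ i)) k i (σ i) • v k)) =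
      ∑ σ : Equiv.Perm (Fin r), ∑ μ : Equiv.Perm (Fin r),
        (((Equiv.Perm.sign σ : ℤ) * (Equiv.Perm.sign μ : ℤ) : ℤ) : ℂ) •
          ExteriorAlgebra.ιMulti ℂ r (fun i => ∑ k : Fin n, a (Fin.castLE hrn i) k (σ i) (μ i) • v k) := by
  rw [Finset.sum_comm]
  refine Fintype.sum_equiv (Equiv.inv _) _ _ fun μ => ?_
  refine Fintype.sum_equiv (Equiv.mulRight μ⁻¹) _ _ fun σ => ?_
  have h := (ExteriorAlgebra.ιMulti ℂ r).map_perm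
    (fun i => ∑ k : Fin n, a (Fin.castLE hrn i) k (μ⁻¹ i) ((σ * μ⁻¹) i) • v k) μ
  have e : ((fun i => ∑ k : Fin n, a (Fin.castLE hrn i) k (μ⁻¹ i) ((σ * μ⁻¹) i) • v k) ∘ μ)
      = fun i => ∑ k : Fin n, a (Fin.castLE hrn (μ i)) k i (σ i) • v k := by
    funext i
    simp
  rw [e] at h
  rw [h]
  simp only [Equiv.inv_apply, Equiv.coe_mulRight, Equiv.Perm.sign_mul, Equiv.Perm.sign_inv]
  rcases Int.units_eq_one_or (Equiv.Perm.sign μ) with h1 | h1 <;>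
  rcases Int.units_eq_one_or (Equiv.Perm.sign σ) with h2 | h2 <;>
  simp [h1, h2]
end

section
/- Let n, r ≥ 1 with n·r ≤ 6 or min(n,r) = 1. Then every linear map H : Matrix (Fin n) (Fin n) ℂ →ₗ[ℂ] Matrix (Fin r) (Fin r) ℂ that maps every positive semidefinite matrix to a positive semidefinite matrix is decomposable. -/
open Matrix ComplexOrder

/-- A linear map `H` on matrices is decomposable if
`H(X) = Σ_p V_pᴴ·X·V_p + Σ_p W_pᴴ·Xᵀ·W_p` for some matrices `V_p`, `W_p`. -/
def IsDecomposableMap {n r : ℕ}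
    (H : Matrix (Fin n) (Fin n) ℂ →ₗ[ℂ] Matrix (Fin r) (Fin r) ℂ) : Prop :=
  ∃ (N : ℕ) (V W : Fin N → Matrix (Fin n) (Fin r) ℂ),
    ∀ X : Matrix (Fin n) (Fin n) ℂ,
      H X = (∑ p, (V p)ᴴ * X * V p) + ∑ p, (W p)ᴴ * Xᵀ * W p

namespace Woro

/-- partial transpose -/
def pt {m : Type*} (X : Matrix (m ⊕ m) (m ⊕ m) ℂ) : Matrix (m ⊕ m) (m ⊕ m) ℂ :=
  fromBlocks X.toBlocks₁₁ X.toBlocks₂₁ X.toBlocks₁₂ X.toBlocks₂₂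

section basics
variable {m : Type*}

lemma pt_fromBlocks (A B C D : Matrix m m ℂ) :
    pt (fromBlocks A B C D) = fromBlocks A C B D := by simp [pt]

lemma pt_pt (X : Matrix (m ⊕ m) (m ⊕ m) ℂ) : pt (pt X) = X := by
  ext (i | i) (j | j) <;> rfl

lemma pt_add (X Y : Matrix (m ⊕ m) (m ⊕ m) ℂ) : pt (X + Y) = pt X + pt Y := by
  ext (i | i) (j | j) <;> rfl

lemma pt_sub (X Y : Matrix (m ⊕ m) (m ⊕ m) ℂ) : pt (X - Y) = pt X - pt Y := by
  ext (i | i) (j | j) <;> rfl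

lemma pt_smul (c : ℂ) (X : Matrix (m ⊕ m) (m ⊕ m) ℂ) : pt (c • X) = c • pt X := by
  ext (i | i) (j | j) <;> rfl

lemma pt_rsmul (c : ℝ) (X : Matrix (m ⊕ m) (m ⊕ m) ℂ) : pt (c • X) = c • pt X := by
  ext (i | i) (j | j) <;> rfl

lemma pt_conjTranspose (X : Matrix (m ⊕ m) (m ⊕ m) ℂ) : pt Xᴴ = (pt X)ᴴ := by
  ext (i | i) (j | j) <;> rfl

lemma pt_one [DecidableEq m] : pt (1 : Matrix (m ⊕ m) (m ⊕ m) ℂ) = 1 := by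
  rw [← fromBlocks_one, pt_fromBlocks]

lemma pt_trace [Fintype m] (X : Matrix (m ⊕ m) (m ⊕ m) ℂ) : (pt X).trace = X.trace := by
  simp [Matrix.trace, pt, toBlocks₁₁, toBlocks₂₂]

/-- positive partial transpose -/
def PPT (X : Matrix (m ⊕ m) (m ⊕ m) ℂ) : Prop := X.PosSemidef ∧ (pt X).PosSemidef

/-- extremality in the cone of PPT matrices -/
def Ext (X : Matrix (m ⊕ m) (m ⊕ m) ℂ) : Prop :=
  ∀ σ, PPT (X + σ) → PPT (X - σ) → ∃ c : ℝ, σ = c • X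

/-- product vector -/
def pv (s t : ℂ) (f : m → ℂ) : m ⊕ m → ℂ := Sum.elim (s • f) (t • f)

/-- the conclusion: proportional to a product projector -/
def IsProd (X : Matrix (m ⊕ m) (m ⊕ m) ℂ) : Prop :=
  ∃ (s t : ℂ) (f : m → ℂ) (c : ℝ), pv s t f ≠ 0 ∧ vecMulVec (pv s t f) (star (pv s t f)) = c • X

end basics

lemma exists_eps {κ : Type*} [Fintype κ] [DecidableEq κ] (T : Matrix κ κ ℂ) (hT : T.IsHermitian) :
    ∃ ε₀ : ℝ, 0 < ε₀ ∧ ∀ ε : ℝ, |ε| ≤ ε₀ → (1 + ε • T).PosSemidef := by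
  set M : ℝ := 1 + ∑ i, |hT.eigenvalues i| with hM
  have hM0 : 0 < M := by positivity
  refine ⟨1 / M, by positivity, fun ε hε => ?_⟩
  have hs := hT.spectral_theorem
  rw [Unitary.conjStarAlgAut_apply] at hs
  set U := hT.eigenvectorUnitary
  have h1 : (1 : Matrix κ κ ℂ) + ε • T
      = (U : Matrix κ κ ℂ) * (diagonal (fun i => ((1 + ε * hT.eigenvalues i : ℝ) : ℂ))) *
        (U : Matrix κ κ ℂ)ᴴ := by
    have h2 : (diagonal (fun i => ((1 + ε * hT.eigenvalues i : ℝ) : ℂ)))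
      = 1 + ε • diagonal (RCLike.ofReal ∘ hT.eigenvalues) := by
      ext i j
      by_cases h : i = j
      · subst h; simp
      · simp [h]
    rw [h2, Matrix.mul_add, Matrix.add_mul, Matrix.mul_one, Matrix.mul_smul, Matrix.smul_mul]
    congr 1
    · exact (Unitary.coe_mul_star_self U).symm
    · congr 1
  rw [h1]
  refine PosSemidef.mul_mul_conjTranspose_same (PosSemidef.diagonal fun i => ?_) _
  have h3 : |hT.eigenvalues i| ≤ M := by
    have := Finset.single_le_sum (f := fun i => |hT.eigenvalues i|) (fun i _ => abs_nonneg _)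
      (Finset.mem_univ i)
    linarith
  have h4 : |ε * hT.eigenvalues i| ≤ 1 := by
    rw [abs_mul]
    calc |ε| * |hT.eigenvalues i| ≤ 1 / M * M := by gcongr
      _ = 1 := by field_simp
  have h5 : 0 ≤ 1 + ε * hT.eigenvalues i := by linarith [(abs_le.1 h4).1]
  simpa using Complex.zero_le_real.2 h5

lemma ext_apply {m κ₁ κ₂ : Type*} [Fintype m] [Fintype κ₁] [Fintype κ₂]
    {X : Matrix (m ⊕ m) (m ⊕ m) ℂ} (hX : Ext X)
    {W₁ : Matrix (m ⊕ m) κ₁ ℂ} {W₂ : Matrix (m ⊕ m) κ₂ ℂ}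
    (h₁ : X = W₁ * W₁ᴴ) (h₂ : pt X = W₂ * W₂ᴴ)
    {T₁ : Matrix κ₁ κ₁ ℂ} {T₂ : Matrix κ₂ κ₂ ℂ} (hT₁ : T₁.IsHermitian) (hT₂ : T₂.IsHermitian)
    (hT : pt (W₁ * T₁ * W₁ᴴ) = W₂ * T₂ * W₂ᴴ) : ∃ c : ℝ, W₁ * T₁ * W₁ᴴ = c • X := by
  classical
  obtain ⟨ε₁, h1, h1'⟩ := exists_eps T₁ hT₁
  obtain ⟨ε₂, h2, h2'⟩ := exists_eps T₂ hT₂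
  set ε := min ε₁ ε₂
  have hε : 0 < ε := lt_min h1 h2
  have key : ∀ δ : ℝ, |δ| ≤ ε → PPT (X + δ • (W₁ * T₁ * W₁ᴴ)) := by
    intro δ hδ
    constructor
    · have := (h1' δ (hδ.trans (min_le_left _ _))).mul_mul_conjTranspose_same W₁
      rwa [Matrix.mul_add, Matrix.add_mul, Matrix.mul_one, ← h₁, Matrix.mul_smul, Matrix.smul_mul]
        at this
    · have := (h2' δ (hδ.trans (min_le_right _ _))).mul_mul_conjTranspose_same W₂
      rwa [Matrix.mul_add, Matrix.add_mul, Matrix.mul_one, ← h₂, Matrix.mul_smul, Matrix.smul_mul,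
        ← hT, ← pt_rsmul, ← pt_add] at this
  obtain ⟨c, hc⟩ := hX (ε • (W₁ * T₁ * W₁ᴴ)) (key ε (by rw [abs_of_pos hε])) (by
    have := key (-ε) (by rw [abs_neg, abs_of_pos hε])
    rwa [neg_smul, ← sub_eq_add_neg] at this)
  refine ⟨ε⁻¹ * c, ?_⟩
  rw [mul_smul, ← hc, smul_smul, inv_mul_cancel₀ hε.ne', one_smul]

lemma sum_subtype_aux {m : Type} [Fintype m] (ev : m → ℝ) [DecidablePred fun i => ev i ≠ 0]
    (g : m → ℂ) (hg : ∀ i, ev i = 0 → g i = 0) :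
    ∑ i : {i // ev i ≠ 0}, g i = ∑ i, g i := by
  rw [← Finset.sum_subtype (Finset.univ.filter fun i => ev i ≠ 0) (by simp) g]
  refine Finset.sum_subset (Finset.filter_subset _ _) fun i _ hi => hg i ?_
  simpa using hi

/-- full rank factorization -/
lemma rank_fact {m : Type} [Fintype m] [DecidableEq m] {P : Matrix m m ℂ} (hP : P.PosSemidef) :
    ∃ (ι : Type) (_ : Fintype ι) (_ : DecidableEq ι) (S : Matrix m ι ℂ) (L : Matrix ι m ℂ),
      Fintype.card ι ≤ Fintype.card m ∧ P = S * Sᴴ ∧ L * S = 1 := by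
  classical
  have hs := hP.1.spectral_theorem
  rw [Unitary.conjStarAlgAut_apply] at hs
  set U := hP.1.eigenvectorUnitary
  set ev := hP.1.eigenvalues with hev
  have hnn : ∀ i, 0 ≤ ev i := hP.eigenvalues_nonneg
  refine ⟨{i // ev i ≠ 0}, inferInstance, inferInstance,
    Matrix.of fun i j => (U : Matrix m m ℂ) i j * (Real.sqrt (ev j) : ℂ),
    Matrix.of fun j i => ((Real.sqrt (ev j))⁻¹ : ℂ) * (star (U : Matrix m m ℂ)) j i,
    Fintype.card_subtype_le _, ?_, ?_⟩
  · conv_lhs => rw [hs]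
    ext i j
    rw [mul_apply, mul_apply]
    simp only [mul_diagonal, conjTranspose_apply, of_apply]
    rw [sum_subtype_aux ev (fun k => (U : Matrix m m ℂ) i k * (Real.sqrt (ev k) : ℂ) *
        star ((U : Matrix m m ℂ) j k * (Real.sqrt (ev k) : ℂ))) (by intro k hk; simp [hk])]
    refine Finset.sum_congr rfl fun k _ => ?_
    have h1 : ((Real.sqrt (ev k) : ℂ)) * (Real.sqrt (ev k) : ℂ) = (ev k : ℂ) := by
      rw [← Complex.ofReal_mul, Real.mul_self_sqrt (hnn k)]
    rw [star_mul', star_apply]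
    simp only [Function.comp, RCLike.star_def, Complex.conj_ofReal]
    have h2 : ((RCLike.ofReal (ev k) : ℂ)) = (ev k : ℂ) := rfl
    rw [h2, ← h1]
    ring
  · ext a b
    have h1 : (star (U : Matrix m m ℂ) * (U : Matrix m m ℂ)) a b = (1 : Matrix m m ℂ) a b := by
      rw [Unitary.coe_star_mul_self]
    simp only [mul_apply, of_apply] at h1 ⊢
    have h2 : ((Real.sqrt (ev b)) : ℂ) ≠ 0 := by
      have := b.2
      simpa [Real.sqrt_eq_zero (hnn _)] using this
    calc _ = ((Real.sqrt (ev a))⁻¹ : ℂ) * (∑ i, star (U : Matrix m m ℂ) a i * (U : Matrix m m ℂ) i b) * (Real.sqrt (ev b) : ℂ) := by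
          rw [Finset.mul_sum, Finset.sum_mul]
          refine Finset.sum_congr rfl fun i _ => by ring
      _ = _ := by
          rw [h1]
          by_cases h : a = b
          · subst h; simp [h2]
          · simp [one_apply, h]
            simp [Subtype.ext_iff] at h
            simp [h]

end Woro

namespace Woro

section claimA
open Module
variable {E : Type*} [NormedAddCommGroup E] [InnerProductSpace ℂ E] [FiniteDimensional ℂ E]

local notation "⟪" x "," y "⟫" => inner ℂ x y

lemma expand3 (hd : finrank ℂ E ≤ 3) (u a b : E) (hu : u ≠ 0) (ha : a ≠ 0) (hb : b ≠ 0)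
    (hua : ⟪u, a⟫ = 0) (hub : ⟪u, b⟫ = 0) (hab : ⟪a, b⟫ = 0) :
    ∃ cu ca cb : ℝ, ∀ v w : E, ⟪v, w⟫ = cu * (⟪v, u⟫ * ⟪u, w⟫) + ca * (⟪v, a⟫ * ⟪a, w⟫)
      + cb * (⟪v, b⟫ * ⟪b, w⟫) := by
  let e : Fin 3 → E := ![(‖u‖⁻¹ : ℂ) • u, (‖a‖⁻¹ : ℂ) • a, (‖b‖⁻¹ : ℂ) • b]
  have hau : ⟪a, u⟫ = 0 := by rw [← inner_conj_symm, hua, map_zero]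
  have hbu : ⟪b, u⟫ = 0 := by rw [← inner_conj_symm, hub, map_zero]
  have hba : ⟪b, a⟫ = 0 := by rw [← inner_conj_symm, hab, map_zero]
  have hu' : ‖u‖ ≠ 0 := norm_ne_zero_iff.2 hu
  have ha' : ‖a‖ ≠ 0 := norm_ne_zero_iff.2 ha
  have hb' : ‖b‖ ≠ 0 := norm_ne_zero_iff.2 hb
  have he : Orthonormal ℂ e := by
    constructor
    · intro i
      fin_cases i <;> simp [e, norm_smul, hu', ha', hb']
    · intro i j hij
      fin_cases i <;> fin_cases j <;>
        simp [e, inner_smul_left, inner_smul_right, hua, hub, hab, hau, hbu, hba] at hij ⊢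
  have hcard : Fintype.card (Fin 3) = finrank ℂ E := by
    have := he.linearIndependent.fintype_card_le_finrank
    simp at this ⊢
    omega
  let bs : OrthonormalBasis (Fin 3) ℂ E :=
    (basisOfOrthonormalOfCardEqFinrank he hcard).toOrthonormalBasis (by simpa using he)
  have hbs : ∀ i, bs i = e i := by intro i; simp [bs]
  refine ⟨‖u‖⁻¹ * ‖u‖⁻¹, ‖a‖⁻¹ * ‖a‖⁻¹, ‖b‖⁻¹ * ‖b‖⁻¹, fun v w => ?_⟩
  rw [← bs.sum_inner_mul_inner v w]
  simp only [hbs, Fin.sum_univ_three, e]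
  simp [inner_smul_left, inner_smul_right]
  ring

lemma real_inner_aux {v w u a b : E} {cu ca cb : ℝ}
    (h : ⟪v, w⟫ = cu * (⟪v, u⟫ * ⟪u, w⟫) + ca * (⟪v, a⟫ * ⟪a, w⟫) + cb * (⟪v, b⟫ * ⟪b, w⟫))
    (h1 : (⟪u, v⟫).im = 0) (h2 : (⟪a, v⟫).im = 0) (h3 : (⟪b, v⟫).im = 0)
    (h4 : (⟪u, w⟫).im = 0) (h5 : (⟪a, w⟫).im = 0) (h6 : (⟪b, w⟫).im = 0) : (⟪v, w⟫).im = 0 := by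
  have k1 : (⟪v, u⟫).im = 0 := by rw [← inner_conj_symm, Complex.conj_im, h1, neg_zero]
  have k2 : (⟪v, a⟫).im = 0 := by rw [← inner_conj_symm, Complex.conj_im, h2, neg_zero]
  have k3 : (⟪v, b⟫).im = 0 := by rw [← inner_conj_symm, Complex.conj_im, h3, neg_zero]
  rw [h]
  simp [k1, k2, k3, h4, h5, h6]

lemma claimA1 (hd : finrank ℂ E ≤ 3) (S T : E →ₗ[ℂ] E)
    (hS : ∀ v w, ⟪S v, w⟫ = ⟪v, S w⟫) (hT : ∀ v w, ⟪T v, w⟫ = ⟪v, T w⟫) (x y u : E)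
    (hK : ∀ v, S (T v) - T (S v) = (Complex.I / 2) • (⟪y, v⟫ • y - ⟪x, v⟫ • x))
    (hne : ∃ v, ⟪y, v⟫ • y - ⟪x, v⟫ • x ≠ 0)
    (hu : u ≠ 0) (hxu : ⟪x, u⟫ = 0) (hyu : ⟪y, u⟫ = 0) (hSu : ⟪u, S u⟫ = 0) (hTu : ⟪u, T u⟫ = 0)
    (hST : ⟪S u, T u⟫ = 0) :
    Complex.normSq (⟪u, S y⟫ + Complex.I * ⟪u, T y⟫) =
      Complex.normSq (⟪u, S x⟫ - Complex.I * ⟪u, T x⟫) := by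
  simp only [← hS, ← hT]
  have hcomm : S (T u) = T (S u) := by
    have := hK u
    rw [hxu, hyu] at this
    simpa [sub_eq_zero] using this
  -- matrix elements of the commutator
  have hKi : ∀ w v, ⟪S w, T v⟫ - ⟪T w, S v⟫ =
      (Complex.I / 2) * (⟪y, v⟫ * ⟪w, y⟫ - ⟪x, v⟫ * ⟪w, x⟫) := by
    intro w v
    rw [hS, hT, ← inner_sub_right, hK, inner_smul_right, inner_sub_right, inner_smul_right,
      inner_smul_right]
  set a := S u with ha
  set b := T u with hb
  have hself : ∀ v : E, (⟪v, v⟫).im = 0 := fun v => inner_self_im (𝕜 := ℂ) v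
  have hSr : ∀ v : E, (⟪v, S v⟫).im = 0 := by
    intro v
    have : (starRingEnd ℂ) ⟪v, S v⟫ = ⟪v, S v⟫ := by rw [inner_conj_symm, hS]
    exact Complex.conj_eq_iff_im.1 this
  have hTr : ∀ v : E, (⟪v, T v⟫).im = 0 := by
    intro v
    have : (starRingEnd ℂ) ⟪v, T v⟫ = ⟪v, T v⟫ := by rw [inner_conj_symm, hT]
    exact Complex.conj_eq_iff_im.1 this
  have hconjim : ∀ v w : E, (⟪v, w⟫).im = 0 → (⟪w, v⟫).im = 0 := by
    intro v w h
    rw [← inner_conj_symm, Complex.conj_im, h, neg_zero]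
  -- equality of squared norms from vanishing commutator
  have hsq : ∀ v : E, ⟪S v, T v⟫ - ⟪T v, S v⟫ = 0 → Complex.normSq ⟪v, y⟫ = Complex.normSq ⟪v, x⟫ := by
    intro v h
    have h1 := hKi v v
    rw [h, ← inner_conj_symm y v, ← inner_conj_symm x v, ← Complex.normSq_eq_conj_mul_self,
      ← Complex.normSq_eq_conj_mul_self] at h1
    have h2 : ((Complex.normSq ⟪v, y⟫ : ℂ)) - Complex.normSq ⟪v, x⟫ = 0 := by
      have h3 : Complex.I / 2 ≠ 0 := by simp
      exact (mul_eq_zero.1 h1.symm).resolve_left h3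
    exact_mod_cast sub_eq_zero.1 h2
  by_cases ha0 : a = 0
  · have hSb : S b = 0 := by rw [hcomm, ha0, map_zero]
    have := hsq b (by rw [hSb]; simp)
    rw [ha0]; simp [this]
  by_cases hb0 : b = 0
  · have hTa : T a = 0 := by rw [← hcomm, hb0, map_zero]
    have := hsq a (by rw [hTa]; simp)
    rw [hb0]; simp [this]
  obtain ⟨cu, ca, cb, hexp⟩ := expand3 hd u a b hu ha0 hb0 hSu hTu hST
  have hba : ⟪b, a⟫ = 0 := by rw [← inner_conj_symm, hST, map_zero]
  have uSa : (⟪u, S a⟫).im = 0 := by rw [← hS]; exact hself a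
  have aSa := hSr a
  have bSa : (⟪b, S a⟫).im = 0 := by rw [← hS, hcomm, hT]; exact hTr a
  have uTa : (⟪u, T a⟫).im = 0 := by rw [← hT, ← hb, hba]; simp
  have aTa := hTr a
  have bTa : (⟪b, T a⟫).im = 0 := by rw [← hcomm]; exact hSr b
  have uTb : (⟪u, T b⟫).im = 0 := by rw [← hT]; exact hself b
  have aTb : (⟪a, T b⟫).im = 0 := by rw [← hT, ← hcomm, hS]; exact hSr b
  have bTb := hTr b
  have r1 : (⟪S a, T a⟫).im = 0 := real_inner_aux (hexp _ _) uSa aSa bSa uTa aTa bTa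
  have r2 : (⟪T a, T b⟫).im = 0 := real_inner_aux (hexp _ _) uTa aTa bTa uTb aTb bTb
  have r3 : (⟪S a, T b⟫).im = 0 := real_inner_aux (hexp _ _) uSa aSa bSa uTb aTb bTb
  have r4 : (⟪T a, T a⟫).im = 0 := hself _
  have hcs : ∀ v w : E, (⟪v, w⟫).im = 0 → ⟪v, w⟫ - ⟪w, v⟫ = 0 := by
    intro v w h
    rw [← inner_conj_symm w v, Complex.conj_eq_iff_im.2 h, sub_self]
  have e1 := hsq a (hcs _ _ r1)
  have e2 := hsq b (by rw [hcomm]; exact hcs _ _ r2)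
  have e3 := hKi a b
  rw [hcomm, ← inner_conj_symm y b, ← inner_conj_symm x b] at e3
  have e4 := congrArg Complex.im e3
  rw [Complex.sub_im, r3, r4] at e4
  obtain ⟨v, hv⟩ := hne
  have hyexp : ∀ w, ⟪w, y⟫ = ca * (⟪w, a⟫ * ⟪a, y⟫) + cb * (⟪w, b⟫ * ⟪b, y⟫) := by
    intro w
    rw [hexp w y, ← inner_conj_symm u y, hyu]; simp
  have hxexp : ∀ w, ⟪w, x⟫ = ca * (⟪w, a⟫ * ⟪a, x⟫) + cb * (⟪w, b⟫ * ⟪b, x⟫) := by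
    intro w
    rw [hexp w x, ← inner_conj_symm u x, hxu]; simp
  set ya := ⟪a, y⟫ with hya
  set yb := ⟪b, y⟫ with hyb
  set xa := ⟪a, x⟫ with hxa
  set xb := ⟪b, x⟫ with hxb
  have e5 : ya.re * yb.re + ya.im * yb.im = xa.re * xb.re + xa.im * xb.im := by
    simp [Complex.mul_im, Complex.mul_re] at e4
    linarith
  rw [Complex.normSq_apply, Complex.normSq_apply] at e1 e2
  have e6 : (ya.im * yb.re - ya.re * yb.im) ^ 2 = (xa.im * xb.re - xa.re * xb.im) ^ 2 := by
    have : (ya.im * yb.re - ya.re * yb.im) ^ 2 = (ya.re * ya.re + ya.im * ya.im) *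
      (yb.re * yb.re + yb.im * yb.im) - (ya.re * yb.re + ya.im * yb.im) ^ 2 := by ring
    rw [this, e1, e2, e5]; ring
  rcases sq_eq_sq_iff_eq_or_eq_neg.1 e6 with h | h
  · exfalso
    apply hv
    have f1 : ya * (starRingEnd ℂ) ya = xa * (starRingEnd ℂ) xa := by
      rw [Complex.mul_conj, Complex.mul_conj, Complex.normSq_apply, Complex.normSq_apply, e1]
    have f2 : yb * (starRingEnd ℂ) yb = xb * (starRingEnd ℂ) xb := by
      rw [Complex.mul_conj, Complex.mul_conj, Complex.normSq_apply, Complex.normSq_apply, e2]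
    have f3 : ya * (starRingEnd ℂ) yb = xa * (starRingEnd ℂ) xb := by
      apply Complex.ext <;> simp <;> linarith
    have f4 : yb * (starRingEnd ℂ) ya = xb * (starRingEnd ℂ) xa := by
      apply Complex.ext <;> simp <;> linarith
    apply ext_inner_left ℂ
    intro w
    rw [inner_sub_right, inner_smul_right, inner_smul_right, inner_zero_right,
      ← inner_conj_symm y v, ← inner_conj_symm x v, hyexp v, hxexp v, hyexp w, hxexp w]
    simp only [map_add, map_mul, Complex.conj_ofReal]
    set va := (starRingEnd ℂ) ⟪v, a⟫
    set vb := (starRingEnd ℂ) ⟪v, b⟫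
    linear_combination (ca : ℂ) * ca * va * ⟪w, a⟫ * f1 + (cb : ℂ) * cb * vb * ⟪w, b⟫ * f2
      + (ca : ℂ) * cb * ⟪w, a⟫ * vb * f3 + (ca : ℂ) * cb * ⟪w, b⟫ * va * f4
  · rw [Complex.normSq_apply, Complex.normSq_apply]
    simp
    linarith

lemma exists_phase (π : ℂ) : ∃ θ : ℂ, ‖θ‖ = 1 ∧ (θ ^ 2 * π).im = 0 := by
  by_cases h : π = 0
  · exact ⟨1, by simp, by simp [h]⟩
  · obtain ⟨θ, hθ⟩ := IsAlgClosed.exists_pow_nat_eq ((starRingEnd ℂ) π / ‖π‖) (n := 2) (by norm_num)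
    have hn : ‖π‖ ≠ 0 := norm_ne_zero_iff.2 h
    refine ⟨θ, ?_, ?_⟩
    · have : ‖θ‖ ^ 2 = 1 := by
        rw [← norm_pow, hθ]; simp [hn]
      exact (pow_eq_one_iff_of_nonneg (norm_nonneg _) two_ne_zero).1 this
    · rw [hθ, div_mul_eq_mul_div, ← Complex.normSq_eq_conj_mul_self, ← Complex.ofReal_div,
        Complex.ofReal_im]

lemma claimA2 (hd : finrank ℂ E ≤ 3) (B Bs : E →ₗ[ℂ] E)
    (hB : ∀ v w, ⟪B v, w⟫ = ⟪v, Bs w⟫) (x y u : E)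
    (hK : ∀ v, B (Bs v) - Bs (B v) = ⟪y, v⟫ • y - ⟪x, v⟫ • x)
    (hne : ∃ v, ⟪y, v⟫ • y - ⟪x, v⟫ • x ≠ 0)
    (hxu : ⟪x, u⟫ = 0) (hyu : ⟪y, u⟫ = 0) :
    ‖⟪u, B y⟫‖ = ‖⟪u, Bs x⟫‖ := by
  by_cases hu : u = 0
  · simp [hu]
  have hB' : ∀ v w, ⟪Bs v, w⟫ = ⟪v, B w⟫ := by
    intro v w
    rw [← inner_conj_symm, ← hB, inner_conj_symm]
  have hux : ⟪u, x⟫ = 0 := by rw [← inner_conj_symm, hxu, map_zero]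
  have huy : ⟪u, y⟫ = 0 := by rw [← inner_conj_symm, hyu, map_zero]
  have huu : ⟪u, u⟫ ≠ 0 := inner_self_ne_zero.2 hu
  set β := ⟪u, B u⟫ / ⟪u, u⟫ with hβ
  obtain ⟨θ, hθ, hθ2⟩ := exists_phase ⟪Bs u - (starRingEnd ℂ) β • u, B u - β • u⟫
  have hθθ : (starRingEnd ℂ) θ * θ = 1 := by
    rw [Complex.conj_mul', hθ]; simp
  set θs := (starRingEnd ℂ) θ with hθs
  set βs := (starRingEnd ℂ) β with hβs
  let B0 : E →ₗ[ℂ] E := θ • (B - β • LinearMap.id)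
  let B0s : E →ₗ[ℂ] E := θs • (Bs - βs • LinearMap.id)
  have hB0 : ∀ v, B0 v = θ • (B v - β • v) := fun v => rfl
  have hB0s : ∀ v, B0s v = θs • (Bs v - βs • v) := fun v => rfl
  let S : E →ₗ[ℂ] E := (1 / 2 : ℂ) • (B0 + B0s)
  let T : E →ₗ[ℂ] E := (-Complex.I / 2 : ℂ) • (B0 - B0s)
  have hSv : ∀ v, S v = (1 / 2 : ℂ) • (B0 v + B0s v) := fun v => rfl
  have hTv : ∀ v, T v = (-Complex.I / 2 : ℂ) • (B0 v - B0s v) := fun v => rfl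
  have hadj : ∀ v w, ⟪B0 v, w⟫ = ⟪v, B0s w⟫ := by
    intro v w
    simp only [hB0, hB0s, inner_smul_left, inner_smul_right, inner_sub_left, inner_sub_right, hB,
      hθs, hβs]
  have hadj' : ∀ v w, ⟪B0s v, w⟫ = ⟪v, B0 w⟫ := by
    intro v w
    rw [← inner_conj_symm, ← hadj, inner_conj_symm]
  have hK0 : ∀ v, B0 (B0s v) - B0s (B0 v) = ⟪y, v⟫ • y - ⟪x, v⟫ • x := by
    intro v
    rw [← hK v]
    simp only [hB0, hB0s, map_smul, map_sub]
    have : θ * θs = 1 := by rw [mul_comm]; exact hθθ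
    have e : ∀ w : E, θ • θs • w = w := fun w => by rw [smul_smul, this, one_smul]
    have e' : ∀ w : E, θs • θ • w = w := fun w => by rw [smul_smul, hθθ, one_smul]
    simp only [smul_sub, smul_comm β θs, smul_comm βs θ, e, e']
    rw [smul_comm β βs v]
    abel
  have h2c : (starRingEnd ℂ) (2:ℂ) = 2 := Complex.conj_ofNat 2
  have hSs : ∀ v w, ⟪S v, w⟫ = ⟪v, S w⟫ := by
    intro v w
    simp only [hSv, inner_smul_left, inner_smul_right, inner_add_left, inner_add_right, hadj, hadj']
    simp [h2c]
    ring
  have hTs : ∀ v w, ⟪T v, w⟫ = ⟪v, T w⟫ := by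
    intro v w
    simp only [hTv, inner_smul_left, inner_smul_right, inner_sub_left, inner_sub_right, hadj, hadj']
    simp [h2c]
    ring
  have hKST : ∀ v, S (T v) - T (S v) = (Complex.I / 2) • (⟪y, v⟫ • y - ⟪x, v⟫ • x) := by
    intro v
    rw [← hK0 v]
    simp only [hSv, hTv, map_smul, map_sub, map_add]
    module
  have huB0 : ⟪u, B0 u⟫ = 0 := by
    rw [hB0, inner_smul_right, inner_sub_right, inner_smul_right, hβ]
    field_simp
    ring
  have huB0s : ⟪u, B0s u⟫ = 0 := by
    rw [← hadj, ← inner_conj_symm, huB0, map_zero]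
  have hSu : ⟪u, S u⟫ = 0 := by
    rw [hSv, inner_smul_right, inner_add_right, huB0, huB0s]; simp
  have hTu : ⟪u, T u⟫ = 0 := by
    rw [hTv, inner_smul_right, inner_sub_right, huB0, huB0s]; simp
  have hnorm : ⟪B0 u, B0 u⟫ = ⟪B0s u, B0s u⟫ := by
    have h1 := congrArg (fun w => ⟪u, w⟫) (hK0 u)
    simp only [inner_sub_right, hxu, hyu, zero_smul, sub_self, inner_zero_right] at h1
    rw [hadj, hadj']
    exact (sub_eq_zero.1 h1).symm
  have him : (⟪B0s u, B0 u⟫).im = 0 := by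
    rw [hB0, hB0s, inner_smul_left, inner_smul_right, hθs, Complex.conj_conj, ← mul_assoc, ← sq]
    exact hθ2
  have hST : ⟪S u, T u⟫ = 0 := by
    rw [hSv, hTv, inner_smul_left, inner_smul_right, inner_sub_right, inner_add_left, inner_add_left,
      hnorm, ← inner_conj_symm (B0 u) (B0s u), Complex.conj_eq_iff_im.2 him]
    ring
  have key := claimA1 hd S T hSs hTs x y u hKST hne hu hxu hyu hSu hTu hST
  have k1 : ⟪u, S y⟫ + Complex.I * ⟪u, T y⟫ = θ * ⟪u, B y⟫ := by
    simp only [hSv, hTv, hB0, hB0s, inner_smul_right, inner_add_right, inner_sub_right, huy]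
    linear_combination (-1/2 * (θ * ⟪u, B y⟫ - θs * ⟪u, Bs y⟫)) * Complex.I_sq
  have k2 : ⟪u, S x⟫ - Complex.I * ⟪u, T x⟫ = θs * ⟪u, Bs x⟫ := by
    simp only [hSv, hTv, hB0, hB0s, inner_smul_right, inner_add_right, inner_sub_right, hux]
    linear_combination (1/2 * (θ * ⟪u, B x⟫ - θs * ⟪u, Bs x⟫)) * Complex.I_sq
  rw [k1, k2, Complex.normSq_eq_norm_sq, Complex.normSq_eq_norm_sq, norm_mul, norm_mul, hθs,
    Complex.norm_conj, hθ, one_mul, one_mul] at key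
  exact (sq_eq_sq₀ (norm_nonneg _) (norm_nonneg _)).1 key

lemma exists_unit {p q : ℂ} (h : ‖p‖ = ‖q‖) : ∃ α : ℂ, ‖α‖ = 1 ∧ p = α * q := by
  by_cases hq : q = 0
  · refine ⟨1, by simp, ?_⟩
    rw [hq, norm_zero, norm_eq_zero] at h
    simp [h, hq]
  · refine ⟨p / q, ?_, by field_simp⟩
    rw [norm_div, h, div_self (norm_ne_zero_iff.2 hq)]

lemma exists_z (hd : finrank ℂ E ≤ 3) (B Bs : E →ₗ[ℂ] E)
    (hB : ∀ v w, ⟪B v, w⟫ = ⟪v, Bs w⟫) (x y : E)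
    (hK : ∀ v, B (Bs v) - Bs (B v) = ⟪y, v⟫ • y - ⟪x, v⟫ • x)
    (hne : ∃ v, ⟪y, v⟫ • y - ⟪x, v⟫ • x ≠ 0)
    (hn : ⟪x, x⟫ = ⟪y, y⟫) (htr : ⟪y, B y⟫ = ⟪x, B x⟫) :
    ∃ α z : ℂ, ‖α‖ = 1 ∧ B y - Bs (α • x) = z • y - (starRingEnd ℂ) z • (α • x) := by
  have hB' : ∀ v w, ⟪Bs v, w⟫ = ⟪v, B w⟫ := by
    intro v w
    rw [← inner_conj_symm, ← hB, inner_conj_symm]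
  -- strict Cauchy-Schwarz
  have hx0 : ⟪x, x⟫ ≠ 0 := by
    intro h0
    have hx : x = 0 := inner_self_eq_zero.1 h0
    have hy : y = 0 := inner_self_eq_zero.1 (hn ▸ h0)
    obtain ⟨v, hv⟩ := hne
    exact hv (by simp [hx, hy])
  have hpar : ∀ c : ℂ, y ≠ c • x := by
    intro c hc
    obtain ⟨v, hv⟩ := hne
    apply hv
    have h1 : (starRingEnd ℂ) c * c = 1 := by
      have h2 := hn
      rw [hc, inner_smul_left, inner_smul_right, ← mul_assoc] at h2
      exact (mul_right_cancel₀ hx0 (by rw [one_mul]; exact h2)).symm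
    rw [hc, inner_smul_left, smul_smul]
    rw [show (starRingEnd ℂ) c * ⟪x, v⟫ * c = ⟪x, v⟫ by linear_combination ⟪x, v⟫ * h1, sub_self]
  have hdet : ⟪x, x⟫ * ⟪x, x⟫ - ⟪x, y⟫ * ⟪y, x⟫ ≠ 0 := by
    intro h0
    apply hpar (⟪x, y⟫ / ⟪x, x⟫)
    rw [← sub_eq_zero, ← inner_self_eq_zero (𝕜 := ℂ)]
    have hxr : (starRingEnd ℂ) ⟪x, x⟫ = ⟪x, x⟫ := inner_conj_symm x x
    simp only [inner_sub_left, inner_sub_right, inner_smul_left, inner_smul_right, ← hn, map_div₀,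
      inner_conj_symm, hxr]
    field_simp
    linear_combination h0
  -- the orthogonal complement
  have hli : LinearIndependent ℂ ![x, y] := by
    rw [LinearIndependent.pair_iff]
    intro s t hst
    by_cases ht : t = 0
    · subst ht
      simp only [zero_smul, add_zero, smul_eq_zero] at hst
      rcases hst with h | h
      · exact ⟨h, rfl⟩
      · exact absurd (by simp [h]) hx0
    · exfalso
      apply hpar (-(s / t))
      have : t • y = -(s • x) := by rw [eq_neg_iff_add_eq_zero, add_comm]; exact hst
      calc y = t⁻¹ • t • y := by rw [smul_smul, inv_mul_cancel₀ ht, one_smul]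
        _ = _ := by rw [this, smul_neg, smul_smul, neg_smul, div_eq_inv_mul]
  set V := Submodule.span ℂ (Set.range ![x, y]) with hV
  have hxV : x ∈ V := Submodule.subset_span ⟨0, rfl⟩
  have hyV : y ∈ V := Submodule.subset_span ⟨1, rfl⟩
  have hVr : finrank ℂ V = 2 := by
    rw [hV, finrank_span_eq_card hli]; simp
  have hVo : finrank ℂ Vᗮ ≤ 1 := by
    have := V.finrank_add_finrank_orthogonal
    omega
  obtain ⟨u, hu⟩ := finrank_le_one_iff.1 hVo
  have hxu : ⟪x, (u : E)⟫ = 0 := (Submodule.mem_orthogonal V _).1 u.2 x hxV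
  have hyu : ⟪y, (u : E)⟫ = 0 := (Submodule.mem_orthogonal V _).1 u.2 y hyV
  obtain ⟨α, hα, hα'⟩ := exists_unit (claimA2 hd B Bs hB x y u hK hne hxu hyu)
  have hαα : (starRingEnd ℂ) α * α = 1 := by
    rw [Complex.conj_mul', hα]; simp
  set X := α • x with hX
  set w := B y - Bs X with hw
  have huw : ⟪(u : E), w⟫ = 0 := by
    rw [hw, inner_sub_right, hX, map_smul, inner_smul_right, ← hα', sub_self]
  have hXX : ⟪X, X⟫ = ⟪x, x⟫ := by
    rw [hX, inner_smul_left, inner_smul_right, ← mul_assoc, hαα, one_mul]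
  have hXB : ⟪X, B X⟫ = ⟪x, B x⟫ := by
    rw [hX, map_smul, inner_smul_left, inner_smul_right, ← mul_assoc, hαα, one_mul]
  have hdetX : ⟪x, x⟫ * ⟪x, x⟫ - ⟪X, y⟫ * ⟪y, X⟫ ≠ 0 := by
    rw [hX, inner_smul_left, inner_smul_right]
    rw [show (starRingEnd ℂ) α * ⟪x, y⟫ * (α * ⟪y, x⟫) = ⟪x, y⟫ * ⟪y, x⟫ by
      linear_combination (⟪x, y⟫ * ⟪y, x⟫) * hαα]
    exact hdet
  have hcons : ⟪y, w⟫ + (starRingEnd ℂ) ⟪X, w⟫ = 0 := by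
    rw [inner_conj_symm, hw, inner_sub_right, inner_sub_left, hB, hB', hXB, htr]
    ring
  refine ⟨α, ?_⟩
  rw [← hX, ← hw]
  clear_value w
  set n := ⟪x, x⟫ with hnn
  have hnr : (starRingEnd ℂ) n = n := inner_conj_symm x x
  set c := ⟪y, w⟫ with hc
  set γ := ⟪X, y⟫ with hγ
  have hγc : ⟪y, X⟫ = (starRingEnd ℂ) γ := (inner_conj_symm y X).symm
  rw [hγc] at hdetX
  set z := (n * c + (starRingEnd ℂ) γ * (starRingEnd ℂ) c) / (n * n - γ * (starRingEnd ℂ) γ) with hz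
  have hzc : (starRingEnd ℂ) z = (n * (starRingEnd ℂ) c + γ * c) / (n * n - γ * (starRingEnd ℂ) γ) := by
    rw [hz]
    simp only [map_div₀, map_add, map_mul, map_sub, hnr, Complex.conj_conj]
    rw [mul_comm ((starRingEnd ℂ) γ) γ]
  have hzeq : z * n - (starRingEnd ℂ) z * (starRingEnd ℂ) γ = c := by
    rw [hzc, hz, div_mul_eq_mul_div, div_mul_eq_mul_div, ← sub_div, div_eq_iff hdetX]; ring
  refine ⟨z, hα, ?_⟩
  rw [← sub_eq_zero]
  set v := w - (z • y - (starRingEnd ℂ) z • X) with hv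
  have hyv : ⟪y, v⟫ = 0 := by
    rw [hv, inner_sub_right, inner_sub_right, inner_smul_right, inner_smul_right, ← hn, hγc, ← hc]
    linear_combination -hzeq
  have hXv : ⟪X, v⟫ = 0 := by
    have h1 : ⟪X, w⟫ = - (starRingEnd ℂ) c := by
      have := congrArg (starRingEnd ℂ) hcons
      simp only [map_add, Complex.conj_conj, map_zero] at this
      linear_combination this
    have h2 := congrArg (starRingEnd ℂ) hzeq
    simp only [map_sub, map_mul, Complex.conj_conj, hnr] at h2
    rw [hv, inner_sub_right, inner_sub_right, inner_smul_right, inner_smul_right, hXX, h1, ← hγ]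
    linear_combination h2
  have hxv : ⟪x, v⟫ = 0 := by
    rw [hX, inner_smul_left] at hXv
    exact (mul_eq_zero.1 hXv).resolve_left (by
      intro h; rw [h, zero_mul] at hαα; exact zero_ne_one hαα)
  have hvV : v ∈ Vᗮ := by
    rw [hV, Submodule.mem_orthogonal]
    intro e he
    induction he using Submodule.span_induction with
    | mem e he =>
      obtain ⟨i, rfl⟩ := he
      fin_cases i
      · exact hxv
      · exact hyv
    | zero => simp
    | add a b _ _ ha hb => rw [inner_add_left, ha, hb, add_zero]
    | smul a b _ hb => rw [inner_smul_left, hb, mul_zero]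
  obtain ⟨k, hk⟩ := hu ⟨v, hvV⟩
  have hk' : v = k • (u : E) := by
    have := congrArg Subtype.val hk
    simpa using this.symm
  have huX : ⟪(u : E), X⟫ = 0 := by
    rw [hX, inner_smul_right, ← inner_conj_symm, hxu, map_zero, mul_zero]
  have huy : ⟪(u : E), y⟫ = 0 := by rw [← inner_conj_symm, hyu, map_zero]
  have huv : ⟪(u : E), v⟫ = 0 := by
    rw [hv, inner_sub_right, inner_sub_right, inner_smul_right, inner_smul_right, huw, huX, huy]
    simp
  rw [← inner_self_eq_zero (𝕜 := ℂ)]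
  nth_rewrite 1 [hk']
  rw [inner_smul_left, huv, mul_zero]

end claimA
end Woro

namespace Woro

lemma normal_eig {κ : Type*} [Fintype κ] [DecidableEq κ] [Nonempty κ] (N : Matrix κ κ ℂ)
    (hN : N * Nᴴ = Nᴴ * N) : ∃ (v : κ → ℂ) (z : ℂ), v ≠ 0 ∧ N *ᵥ v = z • v ∧ Nᴴ *ᵥ v = star z • v := by
  obtain ⟨z, hz⟩ := Module.End.exists_eigenvalue (toLin' N)
  obtain ⟨v, hv⟩ := hz.exists_hasEigenvector
  have h1 : N *ᵥ v = z • v := by simpa using hv.apply_eq_smul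
  refine ⟨v, z, hv.2, h1, ?_⟩
  set M : Matrix κ κ ℂ := N - z • 1 with hM
  have hMn : M * Mᴴ = Mᴴ * M := by
    simp only [hM, conjTranspose_sub, conjTranspose_smul, conjTranspose_one, Matrix.sub_mul,
      Matrix.mul_sub, Matrix.smul_mul, Matrix.mul_smul, Matrix.one_mul, Matrix.mul_one, hN]
    rw [smul_sub, smul_sub, smul_comm]
    abel
  have h2 : M *ᵥ v = 0 := by
    rw [hM, sub_mulVec, h1, smul_mulVec, one_mulVec, sub_self]
  have h3 : Mᴴ *ᵥ v = 0 := by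
    rw [← self_mul_conjTranspose_mulVec_eq_zero, hMn, ← mulVec_mulVec, h2, mulVec_zero]
  rw [hM, conjTranspose_sub, conjTranspose_smul, conjTranspose_one, sub_mulVec, smul_mulVec,
    one_mulVec, sub_eq_zero] at h3
  exact h3

lemma main11 {m : Type*} [Fintype m] [DecidableEq m] (hm : Fintype.card m ≤ 3) (B : Matrix m m ℂ)
    (x y : m → ℂ) (hK : B * Bᴴ - Bᴴ * B = vecMulVec y (star y) - vecMulVec x (star x))
    (hne : vecMulVec y (star y) - vecMulVec x (star x) ≠ 0) :
    ∃ (f : m → ℂ) (z s t : ℂ), f ≠ 0 ∧ B *ᵥ f + s • x = z • f ∧ Bᴴ *ᵥ f + t • y = star z • f := by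
  have hn : x ⬝ᵥ star x = y ⬝ᵥ star y := by
    have := congrArg trace hK
    rw [trace_sub, trace_sub, trace_mul_comm, sub_self, trace_vecMulVec, trace_vecMulVec] at this
    exact (sub_eq_zero.1 this.symm).symm
  have htr : (B *ᵥ y) ⬝ᵥ star y = (B *ᵥ x) ⬝ᵥ star x := by
    have := congrArg (fun K => trace (B * K)) hK
    simp only [Matrix.mul_sub, trace_sub, mul_vecMulVec, trace_vecMulVec] at this
    rw [← Matrix.mul_assoc B Bᴴ B, trace_mul_comm (B * Bᴴ) B, sub_self] at this
    exact (sub_eq_zero.1 this.symm)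
  have hadj : ∀ (A : Matrix m m ℂ) (v w : m → ℂ), w ⬝ᵥ star (A *ᵥ v) = (Aᴴ *ᵥ w) ⬝ᵥ star v := by
    intro A v w
    rw [star_mulVec, dotProduct_comm, ← dotProduct_mulVec, dotProduct_comm]
  have hvv : ∀ u v : m → ℂ, vecMulVec u (star u) *ᵥ v = (v ⬝ᵥ star u) • u := by
    intro u v
    ext i
    simp [mulVec, vecMulVec_apply, dotProduct, Finset.sum_mul]
    refine Finset.sum_congr rfl fun j _ => by ring
  obtain ⟨α, z, hα, hz⟩ := exists_z (E := EuclideanSpace ℂ m) (by simpa using hm)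
    (toEuclideanLin B) (toEuclideanLin Bᴴ) (by
      intro v w
      simp [EuclideanSpace.inner_eq_star_dotProduct, hadj])
    (WithLp.toLp 2 x) (WithLp.toLp 2 y) (by
      intro v
      apply (WithLp.ofLp_injective 2)
      have := congrArg (fun K => K *ᵥ v.ofLp) hK
      simp only [sub_mulVec, hvv, ← mulVec_mulVec] at this
      simpa [EuclideanSpace.inner_eq_star_dotProduct] using this)
    (by
      by_contra! h
      apply hne
      apply Matrix.ext_of_mulVec_single
      intro j
      have := congrArg WithLp.ofLp (h (WithLp.toLp 2 (Pi.single j 1)))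
      simp only [EuclideanSpace.inner_eq_star_dotProduct] at this
      rw [sub_mulVec, hvv, hvv, zero_mulVec]
      exact this)
    (by simp only [EuclideanSpace.inner_eq_star_dotProduct]; exact hn)
    (by simpa [EuclideanSpace.inner_eq_star_dotProduct] using htr)
  have hz' : B *ᵥ y - Bᴴ *ᵥ (α • x) = z • y - star z • (α • x) := by
    have := congrArg WithLp.ofLp hz
    rw [mulVec_smul]
    simpa using this
  have hαα : α * star α = 1 := by
    have := Complex.mul_conj' α
    rw [hα] at this
    simpa using this
  have hXX : vecMulVec (α • x) (star (α • x)) = vecMulVec x (star x) := by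
    rw [star_smul, smul_vecMulVec, vecMulVec_smul, smul_smul, hαα, one_smul]
  have hXn : (α • x) ⬝ᵥ star (α • x) = y ⬝ᵥ star y := by
    rw [star_smul, smul_dotProduct, dotProduct_smul, smul_smul, hαα, one_smul, hn]
  have hX0 : α • x ≠ 0 := by
    intro h
    have hy : y = 0 := by
      rw [h] at hXn
      exact dotProduct_star_self_eq_zero.1 (by rw [dotProduct_comm, ← hXn]; simp)
    apply hne
    rw [← hXX, h, hy]; simp
  rw [← hXX] at hK
  set X := α • x with hX
  let N : Matrix (m ⊕ Unit) (m ⊕ Unit) ℂ :=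
    fromBlocks B (replicateCol Unit X) (replicateRow Unit (star y)) (z • 1)
  have hN : N * Nᴴ = Nᴴ * N := by
    simp only [N, fromBlocks_conjTranspose, fromBlocks_multiply, conjTranspose_replicateCol,
      conjTranspose_replicateRow, star_star, conjTranspose_smul, conjTranspose_one]
    have e12 : ∀ i, (B *ᵥ y) i + star z * X i = (Bᴴ *ᵥ X) i + z * y i := by
      intro i
      have := congrFun hz' i
      simp only [Pi.sub_apply, Pi.smul_apply, smul_eq_mul] at this
      linear_combination this
    congr 1
    · rw [← vecMulVec_eq, ← vecMulVec_eq]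
      rw [sub_eq_sub_iff_add_eq_add] at hK
      rw [hK, add_comm]
    · ext i j
      have := e12 i
      simp only [Matrix.add_apply, Matrix.mul_apply, Matrix.mul_smul, Matrix.mul_one, Matrix.smul_apply, replicateCol_apply, smul_eq_mul]
      exact this
    · ext i j
      have := congrArg star (e12 j)
      simp only [Matrix.add_apply, Matrix.mul_apply, Matrix.smul_mul, Matrix.one_mul, Matrix.smul_apply, replicateRow_apply, smul_eq_mul, Pi.star_apply]
      simp only [mulVec, dotProduct, star_add, star_mul', star_sum, star_star, conjTranspose_apply] at this ⊢
      simp only [mul_comm] at this ⊢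
      exact this
    · ext i j
      simp only [Matrix.add_apply, Matrix.mul_apply, replicateRow_apply, replicateCol_apply, Pi.star_apply]
      have := hXn
      simp only [dotProduct, Pi.star_apply] at this
      simp only [mul_comm] at this ⊢
      rw [this]
  obtain ⟨v, z', hv0, h1, h2⟩ := normal_eig N hN
  set f : m → ℂ := fun i => v (Sum.inl i) with hf
  set s := v (Sum.inr ()) with hs
  have hve : v = Sum.elim f (fun _ => s) := by
    ext (i | i) <;> rfl
  have e1 : B *ᵥ f + s • X = z' • f := by
    ext i
    have := congrFun h1 (Sum.inl i)
    rw [hve] at this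
    simpa [N, fromBlocks_mulVec, mulVec, dotProduct, mul_comm] using this
  have e2 : Bᴴ *ᵥ f + s • y = star z' • f := by
    ext i
    have := congrFun h2 (Sum.inl i)
    rw [hve] at this
    simpa [N, fromBlocks_conjTranspose, fromBlocks_mulVec, mulVec, dotProduct, mul_comm] using this
  refine ⟨f, z', s * α, s, ?_, by rw [mul_smul]; exact e1, e2⟩
  intro hf0
  rw [hf0] at e1
  rw [mulVec_zero, smul_zero, zero_add, smul_eq_zero] at e1
  rcases e1 with h | h
  · apply hv0
    rw [hve, hf0, h]
    ext (i | i) <;> rfl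
  · exact hX0 h

end Woro

namespace Woro

lemma pt_pv {m : Type*} (s t : ℂ) (f : m → ℂ) :
    pt (vecMulVec (pv s t f) (star (pv s t f))) =
      vecMulVec (pv (star s) (star t) f) (star (pv (star s) (star t) f)) := by
  ext (i | i) (j | j) <;>
    simp [pt, vecMulVec_apply, pv, toBlocks₁₁, toBlocks₁₂, toBlocks₂₁, toBlocks₂₂] <;> ring

lemma conj_vecMulVec {κ κ' : Type*} [Fintype κ] (W : Matrix κ' κ ℂ) (v : κ → ℂ) :
    W * vecMulVec v (star v) * Wᴴ = vecMulVec (W *ᵥ v) (star (W *ᵥ v)) := by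
  rw [mul_vecMulVec, vecMulVec_mul, star_mulVec]

lemma herm_vecMulVec {κ : Type*} (v : κ → ℂ) : (vecMulVec v (star v)).IsHermitian := by
  rw [Matrix.IsHermitian, conjTranspose_vecMulVec, star_star]

lemma prodcase {m κ₁ κ₂ : Type*} [Fintype m] [Fintype κ₁] [Fintype κ₂]
    {X : Matrix (m ⊕ m) (m ⊕ m) ℂ} (hX : Ext X)
    {W₁ : Matrix (m ⊕ m) κ₁ ℂ} {W₂ : Matrix (m ⊕ m) κ₂ ℂ}
    (h₁ : X = W₁ * W₁ᴴ) (h₂ : pt X = W₂ * W₂ᴴ) {v₁ : κ₁ → ℂ} {v₂ : κ₂ → ℂ} {s t : ℂ} {f : m → ℂ}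
    (hv₁ : W₁ *ᵥ v₁ = pv s t f) (hv₂ : W₂ *ᵥ v₂ = pv (star s) (star t) f) (h0 : pv s t f ≠ 0) :
    IsProd X := by
  obtain ⟨c, hc⟩ := ext_apply hX h₁ h₂ (herm_vecMulVec v₁) (herm_vecMulVec v₂) (by
    rw [conj_vecMulVec, conj_vecMulVec, hv₁, hv₂, pt_pv])
  rw [conj_vecMulVec, hv₁] at hc
  exact ⟨s, t, f, c, h0, hc⟩

lemma left_inv_zero {κ κ' : Type*} [Fintype κ] [Fintype κ'] [DecidableEq κ]
    {W : Matrix κ' κ ℂ} {L : Matrix κ κ' ℂ} (hL : L * W = 1) {T : Matrix κ κ ℂ}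
    (h : W * T * Wᴴ = 0) : T = 0 := by
  have h1 : Wᴴ * Lᴴ = 1 := by rw [← conjTranspose_mul, hL, conjTranspose_one]
  calc T = (L * W) * T * (Wᴴ * Lᴴ) := by rw [hL, h1]; simp
    _ = L * (W * T * Wᴴ) * Lᴴ := by simp only [Matrix.mul_assoc]
    _ = 0 := by rw [h]; simp

lemma herm_I {κ : Type*} (T : Matrix κ κ ℂ) : (Complex.I • (T - Tᴴ)).IsHermitian := by
  rw [Matrix.IsHermitian, conjTranspose_smul, conjTranspose_sub, conjTranspose_conjTranspose]
  ext i j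
  simp
  ring

lemma herm_zero {κ : Type*} (T : Matrix κ κ ℂ) (h : T + Tᴴ = 0) (h' : Complex.I • (T - Tᴴ) = 0) :
    T = 0 := by
  have h'' := (smul_eq_zero.1 h').resolve_left Complex.I_ne_zero
  have : (2 : ℂ) • T = (T + Tᴴ) + (T - Tᴴ) := by rw [two_smul]; abel
  rw [h, h'', add_zero] at this
  exact (smul_eq_zero.1 this).resolve_left two_ne_zero

lemma dimcount {m κ₁ κ₂ : Type*} [Fintype m] [Fintype κ₁] [Fintype κ₂] [DecidableEq κ₁]
    [DecidableEq κ₂]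
    {X : Matrix (m ⊕ m) (m ⊕ m) ℂ} (hX : Ext X) (htr : X.trace ≠ 0)
    {W₁ : Matrix (m ⊕ m) κ₁ ℂ} {W₂ : Matrix (m ⊕ m) κ₂ ℂ}
    {L₁ : Matrix κ₁ (m ⊕ m) ℂ} {L₂ : Matrix κ₂ (m ⊕ m) ℂ} (hL₁ : L₁ * W₁ = 1) (hL₂ : L₂ * W₂ = 1)
    (h₁ : X = W₁ * W₁ᴴ) (h₂ : pt X = W₂ * W₂ᴴ) :
    Fintype.card κ₁ * Fintype.card κ₁ + Fintype.card κ₂ * Fintype.card κ₂ ≤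
      4 * (Fintype.card m * Fintype.card m) + 1 := by
  by_contra! hlt
  let Φ : (Matrix κ₁ κ₁ ℂ × Matrix κ₂ κ₂ ℂ) →ₗ[ℂ] (Matrix (m ⊕ m) (m ⊕ m) ℂ × ℂ) :=
    { toFun := fun T => (pt (W₁ * T.1 * W₁ᴴ) - W₂ * T.2 * W₂ᴴ, (W₁ * T.1 * W₁ᴴ).trace)
      map_add' := by
        intro S T
        simp only [Prod.fst_add, Prod.snd_add, Matrix.mul_add, Matrix.add_mul, pt_add, trace_add,
          Prod.mk_add_mk]
        congr 1
        abel
      map_smul' := by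
        intro c T
        simp only [Prod.smul_fst, Prod.smul_snd, Matrix.mul_smul, Matrix.smul_mul, pt_smul,
          trace_smul, Prod.smul_mk, smul_sub, RingHom.id_apply] }
  have hΦ : ∀ T₁ T₂, Φ (T₁, T₂) = (pt (W₁ * T₁ * W₁ᴴ) - W₂ * T₂ * W₂ᴴ, (W₁ * T₁ * W₁ᴴ).trace) :=
    fun _ _ => rfl
  have hker : LinearMap.ker Φ ≠ ⊥ := by
    apply LinearMap.ker_ne_bot_of_finrank_lt
    simp only [Module.finrank_prod, Module.finrank_matrix, Fintype.card_sum, Module.finrank_self]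
    nlinarith
  obtain ⟨⟨T₁, T₂⟩, hT, hT0⟩ := Submodule.exists_mem_ne_zero_of_ne_bot hker
  rw [LinearMap.mem_ker] at hT
  have hTs : Φ (T₁ᴴ, T₂ᴴ) = 0 := by
    rw [hΦ, Prod.mk_eq_zero] at hT ⊢
    obtain ⟨e1, e2⟩ := hT
    have f1 : W₁ * T₁ᴴ * W₁ᴴ = (W₁ * T₁ * W₁ᴴ)ᴴ := by
      simp [conjTranspose_mul, Matrix.mul_assoc]
    have f2 : W₂ * T₂ᴴ * W₂ᴴ = (W₂ * T₂ * W₂ᴴ)ᴴ := by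
      simp [conjTranspose_mul, Matrix.mul_assoc]
    rw [f1, f2, pt_conjTranspose, ← conjTranspose_sub, e1, trace_conjTranspose, e2]
    simp
  have hz : ∀ S₁ S₂, S₁.IsHermitian → S₂.IsHermitian → Φ (S₁, S₂) = 0 → S₁ = 0 ∧ S₂ = 0 := by
    intro S₁ S₂ hS₁ hS₂ h
    rw [hΦ, Prod.mk_eq_zero, sub_eq_zero] at h
    obtain ⟨e1, e2⟩ := h
    obtain ⟨c, hc⟩ := ext_apply hX h₁ h₂ hS₁ hS₂ e1
    have hc0 : c = 0 := by
      rw [hc, trace_smul] at e2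
      exact (smul_eq_zero.1 e2).resolve_right htr
    rw [hc0, zero_smul] at hc
    refine ⟨left_inv_zero hL₁ hc, left_inv_zero hL₂ ?_⟩
    rw [← e1, hc]
    ext (i | i) (j | j) <;> rfl
  have k1 := hz (T₁ + T₁ᴴ) (T₂ + T₂ᴴ)
    (isHermitian_add_transpose_self T₁) (isHermitian_add_transpose_self T₂) (by
      have : ((T₁ + T₁ᴴ, T₂ + T₂ᴴ) : Matrix κ₁ κ₁ ℂ × Matrix κ₂ κ₂ ℂ) = (T₁, T₂) + (T₁ᴴ, T₂ᴴ) := rfl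
      rw [this, map_add, hT, hTs, add_zero])
  have k2 := hz (Complex.I • (T₁ - T₁ᴴ)) (Complex.I • (T₂ - T₂ᴴ)) (herm_I T₁) (herm_I T₂) (by
      have : ((Complex.I • (T₁ - T₁ᴴ), Complex.I • (T₂ - T₂ᴴ)) : Matrix κ₁ κ₁ ℂ × Matrix κ₂ κ₂ ℂ)
        = Complex.I • ((T₁, T₂) - (T₁ᴴ, T₂ᴴ)) := rfl
      rw [this, map_smul, map_sub, hT, hTs, sub_zero, smul_zero])
  apply hT0
  rw [Prod.mk_eq_zero]
  exact ⟨herm_zero T₁ k1.1 k2.1, herm_zero T₂ k1.2 k2.2⟩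

lemma Wfact {m ι : Type*} [Fintype m] [Fintype ι] [DecidableEq m] (A B : Matrix m m ℂ)
    (X : Matrix m ι ℂ) (h : A - B * Bᴴ = X * Xᴴ) :
    fromBlocks A B Bᴴ 1 = fromBlocks B X 1 (0 : Matrix m ι ℂ) * (fromBlocks B X 1 (0 : Matrix m ι ℂ))ᴴ := by
  rw [fromBlocks_conjTranspose, fromBlocks_multiply, ← h]
  simp

lemma Winv {m ι : Type*} [Fintype m] [Fintype ι] [DecidableEq m] [DecidableEq ι] (B : Matrix m m ℂ)
    (X : Matrix m ι ℂ) (L : Matrix ι m ℂ) (h : L * X = 1) :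
    fromBlocks (0 : Matrix m m ℂ) 1 L (-(L * B)) * fromBlocks B X 1 (0 : Matrix m ι ℂ) = 1 := by
  rw [fromBlocks_multiply, h]
  simp

lemma mulVec_W {m ι : Type*} [Fintype m] [Fintype ι] [DecidableEq m] (B : Matrix m m ℂ)
    (X : Matrix m ι ℂ) (f : m → ℂ) (g : ι → ℂ) (z : ℂ) (h : B *ᵥ f + X *ᵥ g = z • f) :
    fromBlocks B X 1 (0 : Matrix m ι ℂ) *ᵥ (Sum.elim f g) = pv z 1 f := by
  rw [fromBlocks_mulVec]
  simp only [Sum.elim_comp_inl, Sum.elim_comp_inr]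
  rw [h, pv]
  simp

lemma nf {m : Type} [Fintype m] [DecidableEq m] [Nonempty m] (hm : Fintype.card m ≤ 3)
    (A B : Matrix m m ℂ) (hP : PPT (fromBlocks A B Bᴴ 1)) (hE : Ext (fromBlocks A B Bᴴ 1)) :
    IsProd (fromBlocks A B Bᴴ 1) := by
  letI : Invertible (1 : Matrix m m ℂ) := invertibleOne
  have hA1 : (A - B * Bᴴ).PosSemidef := by
    have := (PosDef.fromBlocks₂₂ A B (D := (1 : Matrix m m ℂ)) PosDef.one).1 hP.1
    simpa using this
  have hpt : pt (fromBlocks A B Bᴴ 1) = fromBlocks A Bᴴ Bᴴᴴ 1 := by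
    rw [pt_fromBlocks, conjTranspose_conjTranspose]
  have hA2 : (A - Bᴴ * Bᴴᴴ).PosSemidef := by
    have h2 := hP.2
    rw [hpt] at h2
    have := (PosDef.fromBlocks₂₂ A Bᴴ (D := (1 : Matrix m m ℂ)) PosDef.one).1 h2
    simpa using this
  obtain ⟨ι₁, _, _, X, L₁, -, hX, hL₁⟩ := rank_fact hA1
  obtain ⟨ι₂, _, _, Y, L₂, -, hY, hL₂⟩ := rank_fact hA2
  have f1 := Wfact A B X hX
  have f2 := Wfact A Bᴴ Y hY
  rw [← hpt] at f2
  have hpv : ∀ (z : ℂ) (f : m → ℂ), f ≠ 0 → pv z 1 f ≠ 0 := by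
    intro z f hf h
    apply hf
    ext i
    have := congrFun h (Sum.inr i)
    simpa [pv] using this
  by_cases hB : B * Bᴴ = Bᴴ * B
  · obtain ⟨f, z, hf, h1, h2⟩ := normal_eig B hB
    refine prodcase hE f1 f2 (mulVec_W B X f 0 z (by simp [h1])) (f := f) (t := 1) (v₂ := Sum.elim f 0) ?_ (hpv z f hf)
    rw [star_one]
    exact mulVec_W Bᴴ Y f 0 (star z) (by simp [h2])
  have hK : B * Bᴴ - Bᴴ * B = Y * Yᴴ - X * Xᴴ := by
    rw [← hX, ← hY, conjTranspose_conjTranspose]; abel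
  have htrK : (Y * Yᴴ).trace = (X * Xᴴ).trace := by
    have := congrArg trace hK
    rw [trace_sub, trace_sub, trace_mul_comm, sub_self] at this
    exact sub_eq_zero.1 this.symm
  have hX0 : X * Xᴴ = 0 → False := by
    intro h
    rw [h, trace_zero, trace_mul_conjTranspose_self_eq_zero_iff] at htrK
    rw [h, htrK] at hK
    simp at hK
    exact hB (sub_eq_zero.1 hK)
  have hY0 : Y * Yᴴ = 0 → False := by
    intro h
    have h' := htrK.symm
    rw [h, trace_zero, trace_mul_conjTranspose_self_eq_zero_iff] at h'
    rw [h, h'] at hK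
    simp at hK
    exact hB (sub_eq_zero.1 hK)
  have c1 : 1 ≤ Fintype.card ι₁ := by
    by_contra! hc
    have : IsEmpty ι₁ := Fintype.card_eq_zero_iff.1 (by omega)
    apply hX0
    ext i j
    simp [Matrix.mul_apply]
  have c2 : 1 ≤ Fintype.card ι₂ := by
    by_contra! hc
    have : IsEmpty ι₂ := Fintype.card_eq_zero_iff.1 (by omega)
    apply hY0
    ext i j
    simp [Matrix.mul_apply]
  have htr : (fromBlocks A B Bᴴ 1).trace ≠ 0 := by
    intro h
    have h0 := (PosSemidef.trace_eq_zero_iff hP.1).1 h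
    obtain ⟨i⟩ := ‹Nonempty m›
    have := congrFun (congrFun h0 (Sum.inr i)) (Sum.inr i)
    simp at this
  have hdim := dimcount hE htr (Winv B X L₁ hL₁) (Winv Bᴴ Y L₂ hL₂) f1 f2
  simp only [Fintype.card_sum] at hdim
  have hcc : Fintype.card ι₁ = 1 ∧ Fintype.card ι₂ = 1 := by
    by_contra hcon
    have h3 : 3 ≤ Fintype.card ι₁ + Fintype.card ι₂ := by omega
    generalize Fintype.card ι₁ = a at *
    generalize Fintype.card ι₂ = b at *
    generalize Fintype.card m = d at *
    interval_cases d <;> nlinarith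
  obtain ⟨i1, hi1⟩ := Fintype.card_eq_one_iff.1 hcc.1
  obtain ⟨i2, hi2⟩ := Fintype.card_eq_one_iff.1 hcc.2
  have u1 : (Finset.univ : Finset ι₁) = {i1} := by ext j; simp [hi1 j]
  have u2 : (Finset.univ : Finset ι₂) = {i2} := by ext j; simp [hi2 j]
  have hXx : X * Xᴴ = vecMulVec (fun i => X i i1) (star fun i => X i i1) := by
    ext i j
    simp [Matrix.mul_apply, u1, vecMulVec_apply]
  have hYy : Y * Yᴴ = vecMulVec (fun i => Y i i2) (star fun i => Y i i2) := by
    ext i j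
    simp [Matrix.mul_apply, u2, vecMulVec_apply]
  rw [hXx, hYy] at hK
  obtain ⟨f, z, s, t, hf, h1, h2⟩ := main11 hm B _ _ hK (by
    rw [← hK]; exact fun h => hB (sub_eq_zero.1 h))
  refine prodcase hE f1 f2 (mulVec_W B X f (fun _ => s) z ?_) (f := f) (t := 1) (v₂ := Sum.elim f (fun _ => t)) ?_ (hpv z f hf)
  · rw [← h1]
    congr 1
    ext i
    simp [mulVec, dotProduct, u1, mul_comm]
  · rw [star_one]
    apply mulVec_W
    rw [← h2]
    congr 1
    ext i
    simp [mulVec, dotProduct, u2, mul_comm]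

lemma pt_conj {m ι : Type*} [Fintype ι] (S : Matrix m ι ℂ)
    (Z : Matrix (ι ⊕ ι) (ι ⊕ ι) ℂ) :
    pt (fromBlocks S 0 0 S * Z * (fromBlocks S 0 0 S)ᴴ) =
      fromBlocks S 0 0 S * pt Z * (fromBlocks S 0 0 S)ᴴ := by
  rw [← fromBlocks_toBlocks Z, pt_fromBlocks]
  simp only [fromBlocks_conjTranspose, fromBlocks_multiply]
  simp [pt_fromBlocks]

lemma ppt_conj {m ι : Type*} [Fintype ι] [Fintype m] (S : Matrix m ι ℂ)
    {Z : Matrix (ι ⊕ ι) (ι ⊕ ι) ℂ} (h : PPT Z) :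
    PPT (fromBlocks S 0 0 S * Z * (fromBlocks S 0 0 S)ᴴ) := by
  refine ⟨h.1.mul_mul_conjTranspose_same _, ?_⟩
  rw [pt_conj]
  exact h.2.mul_mul_conjTranspose_same _

lemma ker_aux {m : Type*} [Fintype m] {A B B' C : Matrix m m ℂ}
    (h : (fromBlocks A B B' C).PosSemidef) {y : m → ℂ} (hy : C *ᵥ y = 0) : B *ᵥ y = 0 := by
  have h1 := (h.dotProduct_mulVec_zero_iff (Sum.elim 0 y)).1 (by
    rw [fromBlocks_mulVec]
    simp [dotProduct, hy])
  rw [fromBlocks_mulVec] at h1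
  ext i
  have := congrFun h1 (Sum.inl i)
  simpa using this

lemma gen {m : Type} [Fintype m] [DecidableEq m] (hm : Fintype.card m ≤ 3)
    (X : Matrix (m ⊕ m) (m ⊕ m) ℂ) (hP : PPT X) (hE : Ext X) (hX0 : X ≠ 0) : IsProd X := by
  obtain ⟨A, B, C, rfl, hA⟩ : ∃ A B C, X = fromBlocks A B Bᴴ C ∧ Aᴴ = A := by
    refine ⟨X.toBlocks₁₁, X.toBlocks₁₂, X.toBlocks₂₂, ?_, ?_⟩
    · conv_lhs => rw [← fromBlocks_toBlocks X]
      congr 1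
      ext i j
      exact (hP.1.1.apply _ _).symm
    · ext i j
      exact (hP.1.1.apply _ _)
  have hpt : pt (fromBlocks A B Bᴴ C) = fromBlocks A Bᴴ B C := pt_fromBlocks _ _ _ _
  have hP2 := hP.2
  rw [hpt] at hP2
  have kB : ∀ y, C *ᵥ y = 0 → B *ᵥ y = 0 := fun y hy => ker_aux hP.1 hy
  have kBs : ∀ y, C *ᵥ y = 0 → Bᴴ *ᵥ y = 0 := fun y hy => ker_aux hP2 hy
  by_cases hc : ∃ y, C *ᵥ y = 0 ∧ A *ᵥ y ≠ 0
  · obtain ⟨y, hy, hAy⟩ := hc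
    obtain ⟨ι₁, _, _, W₁, -, -, h1, -⟩ := rank_fact hP.1
    obtain ⟨ι₂, _, _, W₂, -, -, h2, -⟩ := rank_fact hP.2
    refine prodcase hE h1 h2 (v₁ := W₁ᴴ *ᵥ (Sum.elim y 0)) (v₂ := W₂ᴴ *ᵥ (Sum.elim y 0))
      (s := 1) (t := 0) (f := A *ᵥ y) ?_ ?_ ?_
    · rw [mulVec_mulVec, ← h1, fromBlocks_mulVec]
      simp [pv, kBs y hy]
    · rw [mulVec_mulVec, ← h2, hpt, fromBlocks_mulVec]
      simp [pv, kB y hy]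
    · intro h
      apply hAy
      ext i
      have := congrFun h (Sum.inl i)
      simpa [pv] using this
  have kA : ∀ y, C *ᵥ y = 0 → A *ᵥ y = 0 := by
    intro y hy
    by_contra h
    exact hc ⟨y, hy, h⟩
  have hC : C.PosSemidef := by
    have := hP.1.submatrix (Sum.inr : m → m ⊕ m)
    exact this
  obtain ⟨ι, _, _, S, L, hcard, hS, hL⟩ := rank_fact hC
  have hL' : Sᴴ * Lᴴ = 1 := by rw [← conjTranspose_mul, hL, conjTranspose_one]
  have hCP : C * (1 - Lᴴ * Sᴴ) = 0 := by
    rw [Matrix.mul_sub, Matrix.mul_one, hS, Matrix.mul_assoc, ← Matrix.mul_assoc Sᴴ, hL',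
      Matrix.one_mul, sub_self]
  have hkill : ∀ M : Matrix m m ℂ, (∀ y, C *ᵥ y = 0 → M *ᵥ y = 0) → M * (Lᴴ * Sᴴ) = M := by
    intro M hM
    have : M * (1 - Lᴴ * Sᴴ) = 0 := by
      apply Matrix.ext_of_mulVec_single
      intro j
      rw [← mulVec_mulVec, zero_mulVec]
      apply hM
      rw [mulVec_mulVec, hCP, zero_mulVec]
    rw [Matrix.mul_sub, Matrix.mul_one, sub_eq_zero] at this
    exact this.symm
  have hkill2 : ∀ M : Matrix m m ℂ, (∀ y, C *ᵥ y = 0 → M *ᵥ y = 0) →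
      (∀ y, C *ᵥ y = 0 → Mᴴ *ᵥ y = 0) → S * (L * M * Lᴴ) * Sᴴ = M := by
    intro M h1 h2
    have e1 := hkill M h1
    have e2 := congrArg conjTranspose (hkill Mᴴ h2)
    rw [conjTranspose_mul, conjTranspose_mul, conjTranspose_conjTranspose,
      conjTranspose_conjTranspose, conjTranspose_conjTranspose] at e2
    calc S * (L * M * Lᴴ) * Sᴴ = (S * L) * (M * (Lᴴ * Sᴴ)) := by simp only [Matrix.mul_assoc]
      _ = M := by rw [e1, e2]
  set D := fromBlocks S 0 0 S with hD
  set DL := fromBlocks L 0 0 L with hDL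
  have hDD : DL * D = 1 := by
    rw [hD, hDL, fromBlocks_multiply, hL]; simp
  have hDD' : Dᴴ * DLᴴ = 1 := by rw [← conjTranspose_mul, hDD, conjTranspose_one]
  have hC1 : L * C * Lᴴ = 1 := by
    rw [hS, ← Matrix.mul_assoc, hL, Matrix.one_mul, hL']
  set X := fromBlocks A B Bᴴ C with hX
  set R := fromBlocks (L * A * Lᴴ) (L * B * Lᴴ) (L * B * Lᴴ)ᴴ 1 with hR
  have hRX : DL * X * DLᴴ = R := by
    rw [hDL, hX, hR, fromBlocks_conjTranspose, fromBlocks_multiply, fromBlocks_multiply, ← hC1]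
    simp [Matrix.mul_assoc]
  have hXR : D * R * Dᴴ = X := by
    rw [hD, hX, hR, fromBlocks_conjTranspose, fromBlocks_multiply, fromBlocks_multiply, ← hC1]
    have hBB : (L * B * Lᴴ)ᴴ = L * Bᴴ * Lᴴ := by simp [Matrix.mul_assoc]
    simp only [Matrix.zero_mul, Matrix.mul_zero, add_zero, zero_add, conjTranspose_zero, hBB]
    rw [hkill2 A kA (by rwa [hA]), hkill2 B kB kBs, hkill2 Bᴴ kBs (by rwa [conjTranspose_conjTranspose]),
      hkill2 C (fun y hy => hy) (fun y hy => by rw [hC.1.eq]; exact hy)]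
  have hinv : ∀ Z : Matrix (ι ⊕ ι) (ι ⊕ ι) ℂ, DL * (D * Z * Dᴴ) * DLᴴ = Z := by
    intro Z
    calc DL * (D * Z * Dᴴ) * DLᴴ = (DL * D) * Z * (Dᴴ * DLᴴ) := by simp only [Matrix.mul_assoc]
      _ = Z := by rw [hDD, hDD']; simp
  have hRP : PPT R := by
    rw [← hRX]; exact ppt_conj L hP
  have hRE : Ext R := by
    intro σ h1 h2
    obtain ⟨c, hc⟩ := hE (D * σ * Dᴴ)
      (by have := ppt_conj S h1
          rwa [← hD, Matrix.mul_add, Matrix.add_mul, hXR] at this)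
      (by have := ppt_conj S h2
          rwa [← hD, Matrix.mul_sub, Matrix.sub_mul, hXR] at this)
    refine ⟨c, ?_⟩
    rw [← hinv σ, hc, Matrix.mul_smul, Matrix.smul_mul, hRX]
  have : Nonempty ι := by
    by_contra h
    have : IsEmpty ι := not_nonempty_iff.1 h
    apply hX0
    rw [← hXR]
    ext i j
    simp [Matrix.mul_apply]
  obtain ⟨s, t, f, c, h0, hc⟩ := nf (hcard.trans hm) _ _ hRP hRE
  have hDf : D *ᵥ pv s t f = pv s t (S *ᵥ f) := by
    rw [hD, pv, fromBlocks_mulVec]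
    simp [pv, mulVec_smul]
  refine ⟨s, t, S *ᵥ f, c, ?_, ?_⟩
  · intro h
    apply h0
    have : DL *ᵥ (D *ᵥ pv s t f) = 0 := by rw [hDf, h, mulVec_zero]
    rwa [mulVec_mulVec, hDD, one_mulVec] at this
  · rw [← hDf, ← conj_vecMulVec, hc, Matrix.mul_smul, Matrix.smul_mul, ← hR, hXR]

end Woro

namespace Woro

lemma matrix_lcs (κ : Type*) : LocallyConvexSpace ℝ (Matrix κ κ ℂ) :=
  inferInstanceAs (LocallyConvexSpace ℝ (κ → κ → ℂ))

lemma psd_entry {κ : Type} [Fintype κ] [DecidableEq κ] {P : Matrix κ κ ℂ} (hP : P.PosSemidef)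
    (i j : κ) : ‖P i j‖ ≤ P.trace.re := by
  obtain ⟨ι, _, _, S, -, -, hS, -⟩ := rank_fact hP
  have hii : ∀ i, (P i i).re = ∑ k, ‖S i k‖ ^ 2 := by
    intro i
    rw [hS, Matrix.mul_apply, Complex.re_sum]
    refine Finset.sum_congr rfl fun k _ => ?_
    rw [conjTranspose_apply, RCLike.star_def, Complex.mul_conj, Complex.ofReal_re,
      Complex.normSq_eq_norm_sq]
  have hnn : ∀ i, 0 ≤ (P i i).re := fun i => by rw [hii]; positivity
  have htr : ∀ i, (P i i).re ≤ P.trace.re := by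
    intro i
    rw [Matrix.trace, Complex.re_sum]
    exact Finset.single_le_sum (f := fun i => (P i i).re) (fun i _ => hnn i) (Finset.mem_univ i)
  have h1 : ‖P i j‖ ≤ ∑ k, (‖S i k‖ ^ 2 + ‖S j k‖ ^ 2) / 2 := by
    conv_lhs => rw [hS, Matrix.mul_apply]
    refine (norm_sum_le _ _).trans (Finset.sum_le_sum fun k _ => ?_)
    rw [conjTranspose_apply, norm_mul, norm_star]
    nlinarith [sq_nonneg (‖S i k‖ - ‖S j k‖)]
  rw [← Finset.sum_div, Finset.sum_add_distrib, ← hii, ← hii] at h1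
  linarith [htr i, htr j]

lemma psd_closed (κ : Type*) [Fintype κ] : IsClosed {P : Matrix κ κ ℂ | P.PosSemidef} := by
  have : {P : Matrix κ κ ℂ | P.PosSemidef} =
      {P | Pᴴ = P} ∩ ⋂ x : κ → ℂ, {P | 0 ≤ star x ⬝ᵥ P *ᵥ x} := by
    ext P
    simp only [posSemidef_iff_dotProduct_mulVec, Matrix.IsHermitian, Set.mem_setOf_eq,
      Set.mem_inter_iff, Set.mem_iInter]
  rw [this]
  refine IsClosed.inter (isClosed_eq (by fun_prop) continuous_id) (isClosed_iInter fun x => ?_)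
  refine isClosed_le continuous_const ?_
  fun_prop

lemma psd_compact (κ : Type) [Fintype κ] [DecidableEq κ] (M : ℝ) :
    IsCompact {P : Matrix κ κ ℂ | P.PosSemidef ∧ P.trace.re ≤ M} := by
  have hc : IsCompact (Set.pi Set.univ fun _ : κ => Set.pi Set.univ fun _ : κ =>
    Metric.closedBall (0 : ℂ) M) :=
    isCompact_univ_pi fun _ => isCompact_univ_pi fun _ => isCompact_closedBall _ _
  refine IsCompact.of_isClosed_subset (X := κ → κ → ℂ) hc ?_ ?_
  · have : Continuous fun P : Matrix κ κ ℂ => P.trace.re := by fun_prop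
    exact (psd_closed κ).inter (isClosed_le this continuous_const)
  · intro P hP i _ j _
    rw [mem_closedBall_zero_iff]
    exact (psd_entry hP.1 i j).trans hP.2

lemma pt_continuous {m : Type*} :
    Continuous (pt : Matrix (m ⊕ m) (m ⊕ m) ℂ → Matrix (m ⊕ m) (m ⊕ m) ℂ) := by
  unfold pt
  refine Continuous.matrix_fromBlocks ?_ ?_ ?_ ?_ <;>
  · refine continuous_matrix fun i j => ?_
    simp only [toBlocks₁₁, toBlocks₁₂, toBlocks₂₁, toBlocks₂₂, of_apply]
    exact continuous_id.matrix_elem _ _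

lemma PPT.add {m : Type*} {X Y : Matrix (m ⊕ m) (m ⊕ m) ℂ} (hX : PPT X) (hY : PPT Y) :
    PPT (X + Y) := ⟨hX.1.add hY.1, by rw [pt_add]; exact hX.2.add hY.2⟩

lemma PPT.smul {m : Type*} {X : Matrix (m ⊕ m) (m ⊕ m) ℂ} (hX : PPT X) {c : ℝ} (hc : 0 ≤ c) :
    PPT (c • X) := ⟨hX.1.smul hc, by rw [pt_rsmul]; exact hX.2.smul hc⟩

lemma trace_conj_eq {κ : Type*} [Fintype κ] (C : Matrix κ κ ℂ) (q : κ → ℂ) :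
    (C * vecMulVec q (star q)).trace = star q ⬝ᵥ C *ᵥ q := by
  rw [mul_vecMulVec, trace_vecMulVec, dotProduct_comm]

lemma ext_of_extreme {m : Type*} [Fintype m] {ρ : Matrix (m ⊕ m) (m ⊕ m) ℂ}
    (h : ρ ∈ Set.extremePoints ℝ {ρ : Matrix (m ⊕ m) (m ⊕ m) ℂ | PPT ρ ∧ ρ.trace = 1}) : Ext ρ := by
  rw [mem_extremePoints] at h
  obtain ⟨⟨hρ, hρ1⟩, hex⟩ := h
  intro σ h1 h2
  have t1 := h1.1.trace_nonneg
  have t2 := h2.1.trace_nonneg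
  rw [trace_add, hρ1, Complex.le_def] at t1
  rw [trace_sub, hρ1, Complex.le_def] at t2
  simp at t1 t2
  set t := σ.trace.re with ht
  have hσ : σ.trace = (t : ℂ) := by
    apply Complex.ext
    · simp [ht]
    · simp [t1.2]
  have k1 : PPT (ρ + (1 / 2 : ℝ) • (σ - t • ρ)) := by
    have := (h1.smul (c := 1 / 2) (by norm_num)).add (hρ.smul (c := (1 - t) / 2) (by linarith))
    convert this using 1
    module
  have k2 : PPT (ρ - (1 / 2 : ℝ) • (σ - t • ρ)) := by
    have := (h2.smul (c := 1 / 2) (by norm_num)).add (hρ.smul (c := (1 + t) / 2) (by linarith))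
    convert this using 1
    module
  have htr : ((1 / 2 : ℝ) • (σ - t • ρ)).trace = 0 := by
    rw [trace_smul, trace_sub, trace_smul, hρ1, hσ]; simp
  have := (hex _ ⟨k1, by rw [trace_add, htr, hρ1, add_zero]⟩ _
    ⟨k2, by rw [trace_sub, htr, hρ1, sub_zero]⟩
    ⟨1 / 2, 1 / 2, by norm_num, by norm_num, by norm_num, by module⟩).1
  have h3 : σ - t • ρ = 0 := by
    have h4 : (1 / 2 : ℝ) • (σ - t • ρ) = 0 := by simpa using this
    exact (smul_eq_zero.1 h4).resolve_left (by norm_num)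
  exact ⟨t, sub_eq_zero.1 h3⟩

lemma ppt_nonneg {m : Type} [Fintype m] [DecidableEq m] (hm : Fintype.card m ≤ 3)
    (C : Matrix (m ⊕ m) (m ⊕ m) ℂ)
    (hC : ∀ s t f, 0 ≤ (star (pv s t f) ⬝ᵥ C *ᵥ (pv s t f)).re)
    (ρ : Matrix (m ⊕ m) (m ⊕ m) ℂ) (hρ : PPT ρ) : 0 ≤ (C * ρ).trace.re := by
  haveI := matrix_lcs (m ⊕ m)
  set K := {ρ : Matrix (m ⊕ m) (m ⊕ m) ℂ | PPT ρ ∧ ρ.trace = 1} with hK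
  have hKc : IsCompact K := by
    refine (psd_compact (m ⊕ m) 1).of_isClosed_subset ?_ ?_
    · have h1 : IsClosed {ρ : Matrix (m ⊕ m) (m ⊕ m) ℂ | ρ.trace = 1} :=
        isClosed_eq (by fun_prop) continuous_const
      exact ((psd_closed _).inter ((psd_closed _).preimage pt_continuous)).inter h1
    · rintro P ⟨h1, h2⟩
      exact ⟨h1.1, by rw [h2]; simp⟩
  have hKv : Convex ℝ K := by
    rintro P ⟨h1, h2⟩ Q ⟨h3, h4⟩ a b ha hb hab
    refine ⟨(h1.smul ha).add (h3.smul hb), ?_⟩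
    rw [trace_add, trace_smul, trace_smul, h2, h4]
    rw [← add_smul, hab, one_smul]
  have hcont : Continuous fun ρ : Matrix (m ⊕ m) (m ⊕ m) ℂ => (C * ρ).trace.re := by fun_prop
  have hpos : ∀ ρ ∈ K, 0 ≤ (C * ρ).trace.re := by
    suffices K ⊆ {ρ | 0 ≤ (C * ρ).trace.re} from fun ρ h => this h
    rw [← closure_convexHull_extremePoints hKc hKv]
    refine closure_minimal (convexHull_min ?_ ?_) (isClosed_le continuous_const hcont)
    · intro ρ hρ
      have hE := ext_of_extreme hρ
      have hρK := extremePoints_subset hρ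
      have hρ0 : ρ ≠ 0 := by
        intro h
        have := hρK.2
        rw [h] at this
        simp at this
      obtain ⟨s, t, f, c, h0, hc⟩ := gen hm ρ hρK.1 hE hρ0
      have h1 := hC s t f
      rw [← trace_conj_eq, hc, Matrix.mul_smul, trace_smul, Complex.smul_re, smul_eq_mul] at h1
      have hcpos : 0 < c := by
        have h2 := congrArg trace hc
        rw [trace_vecMulVec, trace_smul, hρK.2] at h2
        have h3 := dotProduct_star_self_pos_iff.2 h0
        rw [dotProduct_comm, h2] at h3
        simpa using h3
      exact (mul_nonneg_iff_of_pos_left hcpos).1 h1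
    · intro P h1 Q h2 a b ha hb hab
      simp only [Set.mem_setOf_eq] at h1 h2 ⊢
      rw [Matrix.mul_add, trace_add, Matrix.mul_smul, Matrix.mul_smul, trace_smul, trace_smul,
        Complex.add_re, Complex.smul_re, Complex.smul_re]
      positivity
  have htr := hρ.1.trace_nonneg
  have htr' := Complex.le_def.1 htr
  simp at htr'
  by_cases h0 : ρ.trace = 0
  · rw [(PosSemidef.trace_eq_zero_iff hρ.1).1 h0]; simp
  · have hre : ρ.trace = ((ρ.trace.re : ℝ) : ℂ) := by
      apply Complex.ext
      · simp
      · simp [← htr'.2]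
    have hpos' : 0 < ρ.trace.re := lt_of_le_of_ne htr'.1 (by
      intro h; apply h0; rw [hre, ← h]; simp)
    have := hpos ((ρ.trace.re)⁻¹ • ρ) ⟨hρ.smul (by positivity), by
      rw [trace_smul]
      nth_rewrite 2 [hre]
      rw [Complex.real_smul, ← Complex.ofReal_mul, inv_mul_cancel₀ hpos'.ne', Complex.ofReal_one]⟩
    rw [Matrix.mul_smul, trace_smul, Complex.smul_re, smul_eq_mul] at this
    exact (mul_nonneg_iff_of_pos_left (by positivity)).1 this

end Woro

namespace Woro

lemma trace_fromBlocks' {m : Type*} [Fintype m] (A B C D : Matrix m m ℂ) :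
    (fromBlocks A B C D).trace = A.trace + D.trace := by
  simp [Matrix.trace]

lemma trace_mul_pt {m : Type*} [Fintype m] (G Q : Matrix (m ⊕ m) (m ⊕ m) ℂ) :
    (G * pt Q).trace = (pt G * Q).trace := by
  rw [← fromBlocks_toBlocks G, ← fromBlocks_toBlocks Q]
  simp only [pt_fromBlocks, fromBlocks_multiply, trace_fromBlocks', trace_add]
  ring

lemma functional_rep {κ : Type*} [Fintype κ] [DecidableEq κ] (f : Matrix κ κ ℂ →ₗ[ℝ] ℝ) :
    ∃ G : Matrix κ κ ℂ, ∀ X, f X = (G * X).trace.re := by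
  refine ⟨Matrix.of fun j i => (f (single i j 1) : ℂ) - Complex.I * f (single i j Complex.I), fun X => ?_⟩
  conv_lhs => rw [matrix_eq_sum_single X]
  rw [map_sum, Matrix.trace, Complex.re_sum, ]
  simp only [map_sum, diag_apply, Matrix.mul_apply, Complex.re_sum, of_apply]
  rw [Finset.sum_comm]
  refine Finset.sum_congr rfl fun j _ => Finset.sum_congr rfl fun i _ => ?_
  have : single i j (X i j) = (X i j).re • single i j (1 : ℂ) + (X i j).im • single i j Complex.I := by
    rw [smul_single, smul_single, ← single_add]
    congr 1
    apply Complex.ext <;> simp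
  rw [this, map_add, map_smul, map_smul]
  simp
  ring

lemma herm_part_trace {κ : Type*} [Fintype κ] (G X : Matrix κ κ ℂ) (hX : X.IsHermitian) :
    (((1 / 2 : ℝ) • (G + Gᴴ)) * X).trace.re = (G * X).trace.re := by
  have h : (Gᴴ * X).trace = star ((G * X).trace) := by
    rw [← trace_conjTranspose, conjTranspose_mul, hX.eq, trace_mul_comm]
  rw [Matrix.smul_mul, trace_smul, Matrix.add_mul, trace_add, h]
  simp
  ring

lemma psd_of_bound {κ : Type*} [Fintype κ] [DecidableEq κ] {R : Matrix κ κ ℂ} (hR : R.IsHermitian)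
    {M u : ℝ} (hM : 0 < M)
    (h : ∀ P : Matrix κ κ ℂ, P.PosSemidef → P.trace.re ≤ M → u < (R * P).trace.re) :
    (R - (u / M) • (1 : Matrix κ κ ℂ)).PosSemidef := by
  have hH : (R - (u / M) • (1 : Matrix κ κ ℂ)).IsHermitian := by
    refine hR.sub ?_
    rw [Matrix.IsHermitian, conjTranspose_smul, conjTranspose_one]; simp
  refine PosSemidef.of_dotProduct_mulVec_nonneg hH fun v => ?_
  rw [Complex.le_def]
  refine ⟨?_, (hH.im_star_dotProduct_mulVec_self v).symm⟩
  by_cases hv : v = 0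
  · simp [hv]
  have hvp := dotProduct_star_self_pos_iff.2 hv
  have hvp' := Complex.lt_def.1 hvp
  rw [dotProduct_comm] at hvp'
  set n := (v ⬝ᵥ star v).re with hn
  have hn0 : 0 < n := by simpa using hvp'.1
  have hnc : v ⬝ᵥ star v = (n : ℂ) := by
    apply Complex.ext
    · simp [hn]
    · simpa using hvp'.2.symm
  have h1 := h ((M / n) • vecMulVec v (star v))
    ((posSemidef_vecMulVec_self_star v).smul (by positivity)) (by
      rw [trace_smul, trace_vecMulVec, Complex.smul_re, ← hn, smul_eq_mul]
      rw [div_mul_cancel₀ _ hn0.ne'])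
  rw [Matrix.mul_smul, trace_smul, Complex.smul_re, trace_conj_eq, smul_eq_mul] at h1
  rw [sub_mulVec, dotProduct_sub, smul_mulVec, one_mulVec, dotProduct_smul, Complex.sub_re,
    Complex.smul_re, dotProduct_comm (star v) v, ← hn, smul_eq_mul]
  have h2 : u / M * n < (star v ⬝ᵥ R *ᵥ v).re := by
    rw [div_mul_eq_mul_div, div_lt_iff₀ hM]
    rw [div_mul_eq_mul_div, lt_div_iff₀ hn0] at h1
    linarith
  simp only [Complex.zero_re]
  linarith

lemma decomp {m : Type} [Fintype m] [DecidableEq m] (C : Matrix (m ⊕ m) (m ⊕ m) ℂ)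
    (hH : C.IsHermitian) (hC : ∀ ρ, PPT ρ → 0 ≤ (C * ρ).trace.re) :
    ∃ P Q, P.PosSemidef ∧ Q.PosSemidef ∧ C = P + pt Q := by
  haveI := matrix_lcs (m ⊕ m)
  have h1 : PPT (1 : Matrix (m ⊕ m) (m ⊕ m) ℂ) := ⟨PosSemidef.one, by rw [pt_one]; exact PosSemidef.one⟩
  have htr : 0 ≤ C.trace.re := by simpa using hC 1 h1
  set M := C.trace.re + 1 with hM
  have hM0 : 0 < M := by linarith
  set K := {P : Matrix (m ⊕ m) (m ⊕ m) ℂ | P.PosSemidef ∧ P.trace.re ≤ M} with hK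
  set D := (fun p : Matrix (m ⊕ m) (m ⊕ m) ℂ × Matrix (m ⊕ m) (m ⊕ m) ℂ => p.1 + pt p.2) '' (K ×ˢ K)
    with hD
  have hKc : IsCompact K := psd_compact _ _
  have hDc : IsCompact D := (hKc.prod hKc).image
    (continuous_fst.add (pt_continuous.comp continuous_snd))
  have hKv : Convex ℝ K := by
    rintro P ⟨h1, h2⟩ Q ⟨h3, h4⟩ a b ha hb hab
    refine ⟨(h1.smul ha).add (h3.smul hb), ?_⟩
    rw [trace_add, trace_smul, trace_smul, Complex.add_re, Complex.smul_re, Complex.smul_re,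
      smul_eq_mul, smul_eq_mul]
    calc a * P.trace.re + b * Q.trace.re ≤ a * M + b * M := by gcongr
      _ = M := by rw [← add_mul, hab, one_mul]
  have hDv : Convex ℝ D := by
    rintro _ ⟨⟨P, Q⟩, ⟨hP, hQ⟩, rfl⟩ _ ⟨⟨P', Q'⟩, ⟨hP', hQ'⟩, rfl⟩ a b ha hb hab
    refine ⟨(a • P + b • P', a • Q + b • Q'), ⟨hKv hP hP' ha hb hab, hKv hQ hQ' ha hb hab⟩, ?_⟩
    simp only [pt_add, pt_rsmul]
    module
  have h0K : (0 : Matrix (m ⊕ m) (m ⊕ m) ℂ) ∈ K := ⟨PosSemidef.zero, by simp [hM0.le]⟩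
  have hpt0 : pt (0 : Matrix (m ⊕ m) (m ⊕ m) ℂ) = 0 := by
    ext (i | i) (j | j) <;> rfl
  by_cases hCD : C ∈ D
  · obtain ⟨⟨P, Q⟩, ⟨hP, hQ⟩, h⟩ := hCD
    exact ⟨P, Q, hP.1, hQ.1, h.symm⟩
  exfalso
  obtain ⟨f, u, hfu, hfD⟩ := geometric_hahn_banach_point_closed hDv hDc.isClosed hCD
  obtain ⟨G, hG⟩ := functional_rep (f : Matrix (m ⊕ m) (m ⊕ m) ℂ →ₗ[ℝ] ℝ)
  have hG' : ∀ X, f X = (G * X).trace.re := hG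
  have hu : u < 0 := by
    have := hfD 0 ⟨(0, 0), ⟨h0K, h0K⟩, by simp [hpt0]⟩
    simpa using this
  set R := (1 / 2 : ℝ) • (G + Gᴴ) with hR
  have hRh : R.IsHermitian := by
    rw [hR, Matrix.IsHermitian, conjTranspose_smul, conjTranspose_add, conjTranspose_conjTranspose,
      add_comm]
    simp
  have hRf : ∀ X, X.IsHermitian → (R * X).trace.re = f X := by
    intro X hX
    rw [hR, herm_part_trace G X hX, hG']
  have hppt : PPT (R - (u / M) • (1 : Matrix (m ⊕ m) (m ⊕ m) ℂ)) := by
    constructor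
    · refine psd_of_bound hRh hM0 fun P hP hPt => ?_
      rw [hRf P hP.1]
      exact hfD P ⟨(P, 0), ⟨⟨hP, hPt⟩, h0K⟩, by simp [hpt0]⟩
    · rw [pt_sub, pt_rsmul (u / M), pt_one]
      refine psd_of_bound ?_ hM0 fun P hP hPt => ?_
      · rw [Matrix.IsHermitian, ← pt_conjTranspose, hRh.eq]
      · rw [← trace_mul_pt, hRf (pt P) (by rw [Matrix.IsHermitian, ← pt_conjTranspose, hP.1.eq])]
        exact hfD (pt P) ⟨(0, P), ⟨h0K, ⟨hP, hPt⟩⟩, by simp⟩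
  have := hC _ hppt
  rw [trace_mul_comm, Matrix.sub_mul, trace_sub, Complex.sub_re, hRf C hH, Matrix.smul_mul,
    Matrix.one_mul, trace_smul, Complex.smul_re, smul_eq_mul] at this
  have h3 : u / M * C.trace.re = u - u / M := by
    rw [show C.trace.re = M - 1 by rw [hM]; ring]
    field_simp
  have h4 : u / M < 0 := div_neg_of_neg_of_pos hu hM0
  linarith

end Woro

namespace Woro

lemma map_entry {n r : ℕ} (H : Matrix (Fin n) (Fin n) ℂ →ₗ[ℂ] Matrix (Fin r) (Fin r) ℂ)
    (X : Matrix (Fin n) (Fin n) ℂ) (k l : Fin r) :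
    H X k l = ∑ i, ∑ j, X i j * H (single i j 1) k l := by
  conv_lhs => rw [matrix_eq_sum_single X]
  simp only [map_sum, Matrix.sum_apply]
  refine Finset.sum_congr rfl fun i _ => Finset.sum_congr rfl fun j _ => ?_
  have : single i j (X i j) = X i j • single i j (1 : ℂ) := by rw [smul_single]; simp
  rw [this, map_smul]; rfl

lemma entryV {n r : ℕ} (V : Matrix (Fin n) (Fin r) ℂ) (X : Matrix (Fin n) (Fin n) ℂ) (k l : Fin r) :
    (Vᴴ * X * V) k l = ∑ i, ∑ j, X i j * (star (V i k) * V j l) := by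
  simp only [Matrix.mul_apply, conjTranspose_apply, Finset.sum_mul]
  rw [Finset.sum_comm]
  refine Finset.sum_congr rfl fun i _ => Finset.sum_congr rfl fun j _ => by ring

lemma entryW {n r : ℕ} (W : Matrix (Fin n) (Fin r) ℂ) (X : Matrix (Fin n) (Fin n) ℂ) (k l : Fin r) :
    (Wᴴ * Xᵀ * W) k l = ∑ i, ∑ j, X i j * (star (W j k) * W i l) := by
  simp only [Matrix.mul_apply, conjTranspose_apply, Finset.sum_mul, transpose_apply]
  refine Finset.sum_congr rfl fun i _ => Finset.sum_congr rfl fun j _ => by ring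

lemma dec_of_coeff {n r : ℕ} (H : Matrix (Fin n) (Fin n) ℂ →ₗ[ℂ] Matrix (Fin r) (Fin r) ℂ)
    {ι : Type} [Fintype ι] (V W : ι → Matrix (Fin n) (Fin r) ℂ)
    (h : ∀ i j k l, H (single i j 1) k l =
      ∑ p, star (V p i k) * V p j l + ∑ p, star (W p j k) * W p i l) : IsDecomposableMap H := by
  refine ⟨Fintype.card ι, fun p => V ((Fintype.equivFin ι).symm p),
    fun p => W ((Fintype.equivFin ι).symm p), fun X => ?_⟩
  rw [(Fintype.equivFin ι).symm.sum_comp (fun p => (V p)ᴴ * X * V p),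
    (Fintype.equivFin ι).symm.sum_comp (fun p => (W p)ᴴ * Xᵀ * W p)]
  ext k l
  rw [map_entry, Matrix.add_apply, Matrix.sum_apply, Matrix.sum_apply]
  simp only [entryW]
  simp only [entryV, h, mul_add, Finset.sum_add_distrib, Finset.mul_sum]
  congr 1
  · rw [Finset.sum_comm]
    conv_rhs => rw [Finset.sum_comm]
    rw [Finset.sum_comm]
    refine Finset.sum_congr rfl fun i _ => ?_
    rw [Finset.sum_comm]
  · rw [Finset.sum_comm]
    conv_rhs => rw [Finset.sum_comm]
    rw [Finset.sum_comm]
    refine Finset.sum_congr rfl fun i _ => ?_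
    rw [Finset.sum_comm]

lemma dec_of_coeff2 {n r : ℕ} (H : Matrix (Fin n) (Fin n) ℂ →ₗ[ℂ] Matrix (Fin r) (Fin r) ℂ)
    {ι₁ ι₂ : Type} [Fintype ι₁] [Fintype ι₂] (V : ι₁ → Matrix (Fin n) (Fin r) ℂ)
    (W : ι₂ → Matrix (Fin n) (Fin r) ℂ)
    (h : ∀ i j k l, H (single i j 1) k l =
      ∑ p, star (V p i k) * V p j l + ∑ p, star (W p j k) * W p i l) : IsDecomposableMap H := by
  refine dec_of_coeff H (ι := ι₁ ⊕ ι₂) (Sum.elim V (fun _ => 0)) (Sum.elim (fun _ => 0) W) ?_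
  intro i j k l
  rw [h]
  simp

lemma coeff_of_dec {n r : ℕ} {H : Matrix (Fin n) (Fin n) ℂ →ₗ[ℂ] Matrix (Fin r) (Fin r) ℂ}
    (h : IsDecomposableMap H) : ∃ (N : ℕ) (V W : Fin N → Matrix (Fin n) (Fin r) ℂ),
      ∀ i j k l, H (single i j 1) k l =
      ∑ p, star (V p i k) * V p j l + ∑ p, star (W p j k) * W p i l := by
  obtain ⟨N, V, W, h⟩ := h
  refine ⟨N, V, W, fun i j k l => ?_⟩
  rw [h, Matrix.add_apply, Matrix.sum_apply, Matrix.sum_apply]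
  have hs : ∀ g : Fin n → Fin n → ℂ, ∑ a, ∑ b, single i j (1 : ℂ) a b * g a b = g i j := by
    intro g
    rw [Finset.sum_eq_single i, Finset.sum_eq_single j]
    · simp
    · intro b _ hb; simp [single_apply, hb.symm]
    · simp
    · intro a _ ha
      refine Finset.sum_eq_zero fun b _ => ?_
      simp [single_apply, ha.symm]
    · simp
  congr 1
  · refine Finset.sum_congr rfl fun p _ => ?_
    rw [entryV, hs]
  · refine Finset.sum_congr rfl fun p _ => ?_
    rw [entryW, hs (fun a b => star (W p b k) * W p a l)]

lemma map_herm {n r : ℕ} {H : Matrix (Fin n) (Fin n) ℂ →ₗ[ℂ] Matrix (Fin r) (Fin r) ℂ}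
    (hH : ∀ P : Matrix (Fin n) (Fin n) ℂ, P.PosSemidef → (H P).PosSemidef)
    {X : Matrix (Fin n) (Fin n) ℂ} (hX : X.IsHermitian) : (H X).IsHermitian := by
  obtain ⟨ε, hε, h⟩ := exists_eps X hX
  have h1 := (hH _ (h ε (by rw [abs_of_pos hε]))).1
  have h2 := (hH 1 PosSemidef.one).1
  have h3 : H X = ε⁻¹ • (H (1 + ε • X) - H 1) := by
    have : H (ε • X) = ε • H X := by
      rw [← Complex.coe_smul, map_smul, Complex.coe_smul]
    rw [map_add, add_sub_cancel_left, this, smul_smul, inv_mul_cancel₀ hε.ne', one_smul]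
  rw [h3, Matrix.IsHermitian, conjTranspose_smul, conjTranspose_sub, h1.eq, h2.eq]
  simp

lemma map_conj {n r : ℕ} {H : Matrix (Fin n) (Fin n) ℂ →ₗ[ℂ] Matrix (Fin r) (Fin r) ℂ}
    (hH : ∀ P : Matrix (Fin n) (Fin n) ℂ, P.PosSemidef → (H P).PosSemidef)
    (X : Matrix (Fin n) (Fin n) ℂ) : (H X)ᴴ = H Xᴴ := by
  have h1 : (H (X + Xᴴ))ᴴ = H (X + Xᴴ) := map_herm hH (isHermitian_add_transpose_self X)
  have h2 : (H (Complex.I • (X - Xᴴ)))ᴴ = H (Complex.I • (X - Xᴴ)) := map_herm hH (herm_I X)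
  rw [map_add, conjTranspose_add] at h1
  rw [map_smul, map_sub, conjTranspose_smul, conjTranspose_sub] at h2
  ext k l
  have e1 := congrFun (congrFun h1 k) l
  have e2 := congrFun (congrFun h2 k) l
  simp only [Matrix.add_apply, Matrix.sub_apply, Matrix.smul_apply, smul_eq_mul] at e1 e2
  have hI : star Complex.I = - Complex.I := by simp
  rw [hI] at e2
  have e3 : (H X)ᴴ k l - (H Xᴴ)ᴴ k l = -(H X k l - H Xᴴ k l) := by
    have : Complex.I * ((H X)ᴴ k l - (H Xᴴ)ᴴ k l) = Complex.I * (-(H X k l - H Xᴴ k l)) := by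
      linear_combination -e2
    exact mul_left_cancel₀ Complex.I_ne_zero this
  linear_combination (e1 + e3) / 2

lemma dec_one {r : ℕ} (H : Matrix (Fin 1) (Fin 1) ℂ →ₗ[ℂ] Matrix (Fin r) (Fin r) ℂ)
    (hH : ∀ P : Matrix (Fin 1) (Fin 1) ℂ, P.PosSemidef → (H P).PosSemidef) :
    IsDecomposableMap H := by
  obtain ⟨ι, _, _, S, -, -, hS, -⟩ := rank_fact (hH 1 PosSemidef.one)
  refine dec_of_coeff2 H (ι₁ := ι) (ι₂ := Fin 0) (fun p => Matrix.of fun _ k => star (S k p))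
    (fun _ => 0) ?_
  intro i j k l
  have : single i j (1 : ℂ) = 1 := by
    ext a b
    fin_cases i; fin_cases j; fin_cases a; fin_cases b; simp
  rw [this, hS, Matrix.mul_apply]
  simp

lemma dec_two {r : ℕ} (hr : r ≤ 3) (H : Matrix (Fin 2) (Fin 2) ℂ →ₗ[ℂ] Matrix (Fin r) (Fin r) ℂ)
    (hH : ∀ P : Matrix (Fin 2) (Fin 2) ℂ, P.PosSemidef → (H P).PosSemidef) :
    IsDecomposableMap H := by
  set C : Matrix (Fin r ⊕ Fin r) (Fin r ⊕ Fin r) ℂ :=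
    fromBlocks (H (single 0 0 1)) (H (single 1 0 1)) (H (single 0 1 1)) (H (single 1 1 1)) with hCdef
  have hCh : C.IsHermitian := by
    rw [hCdef, Matrix.IsHermitian, fromBlocks_conjTranspose]
    simp only [map_conj hH, conjTranspose_single, star_one]
  have hCp : ∀ s t f, 0 ≤ (star (pv s t f) ⬝ᵥ C *ᵥ (pv s t f)).re := by
    intro s t f
    have h1 := (hH _ (posSemidef_vecMulVec_self_star (![s, t] : Fin 2 → ℂ))).re_dotProduct_nonneg f
    have h2 : vecMulVec ![s, t] (star ![s, t]) = (s * star s) • single 0 0 (1 : ℂ)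
        + (s * star t) • single 0 1 (1 : ℂ) + (t * star s) • single 1 0 (1 : ℂ)
        + (t * star t) • single 1 1 (1 : ℂ) := by
      ext i j
      fin_cases i <;> fin_cases j <;> simp [vecMulVec_apply, single_apply]
    rw [h2] at h1
    simp only [map_add, map_smul, add_mulVec, smul_mulVec, dotProduct_add, dotProduct_smul] at h1
    have h3 : star (pv s t f) ⬝ᵥ C *ᵥ (pv s t f) =
        (s * star s) • (star f ⬝ᵥ H (single 0 0 1) *ᵥ f)
        + (s * star t) • (star f ⬝ᵥ H (single 0 1 1) *ᵥ f)
        + (t * star s) • (star f ⬝ᵥ H (single 1 0 1) *ᵥ f)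
        + (t * star t) • (star f ⬝ᵥ H (single 1 1 1) *ᵥ f) := by
      have h4 : star (pv s t f) = Sum.elim (star s • star f) (star t • star f) := by
        ext (i | i) <;> simp [pv]
      rw [h4, hCdef, pv, fromBlocks_mulVec]
      simp only [Sum.elim_comp_inl, Sum.elim_comp_inr, sumElim_dotProduct_sumElim, mulVec_smul,
        dotProduct_add, dotProduct_smul, smul_dotProduct, smul_eq_mul]
      ring
    rw [h3]
    exact h1
  obtain ⟨P, Q, hP, hQ, hPQ⟩ := decomp C hCh (ppt_nonneg (by simpa using hr) C hCp)
  obtain ⟨ι₂, _, _, S, -, -, hS, -⟩ := rank_fact hP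
  obtain ⟨ι₁, _, _, T, -, -, hT, -⟩ := rank_fact hQ
  let σ : Fin 2 → Fin r → Fin r ⊕ Fin r := fun i k => ![Sum.inl k, Sum.inr k] i
  refine dec_of_coeff2 H (fun p : ι₁ => Matrix.of fun i k => star (T (σ i k) p))
    (fun p : ι₂ => Matrix.of fun i k => star (S (σ i k) p)) ?_
  intro i j k l
  have h1 : H (single i j 1) k l = C (σ j k) (σ i l) := by
    fin_cases i <;> fin_cases j <;> rfl
  have h2 : pt Q (σ j k) (σ i l) = Q (σ i k) (σ j l) := by
    fin_cases i <;> fin_cases j <;> rfl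
  rw [h1, hPQ, Matrix.add_apply, h2, hT, hS, Matrix.mul_apply, Matrix.mul_apply, add_comm]
  simp

/-- the adjoint map -/
noncomputable def adj {n r : ℕ} (H : Matrix (Fin n) (Fin n) ℂ →ₗ[ℂ] Matrix (Fin r) (Fin r) ℂ) :
    Matrix (Fin r) (Fin r) ℂ →ₗ[ℂ] Matrix (Fin n) (Fin n) ℂ where
  toFun Y := Matrix.of fun i j => ∑ k, ∑ l, Y k l * H (single i j 1) k l
  map_add' Y Z := by
    ext i j
    simp [add_mul, Finset.sum_add_distrib]
  map_smul' c Y := by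
    ext i j
    simp [Finset.mul_sum, mul_assoc]

lemma adj_apply {n r : ℕ} (H : Matrix (Fin n) (Fin n) ℂ →ₗ[ℂ] Matrix (Fin r) (Fin r) ℂ)
    (Y : Matrix (Fin r) (Fin r) ℂ) (i j : Fin n) :
    adj H Y i j = ∑ k, ∑ l, Y k l * H (single i j 1) k l := rfl

lemma adj_single {n r : ℕ} (H : Matrix (Fin n) (Fin n) ℂ →ₗ[ℂ] Matrix (Fin r) (Fin r) ℂ)
    (k l : Fin r) (i j : Fin n) : adj H (single k l 1) i j = H (single i j 1) k l := by
  rw [adj_apply, Finset.sum_eq_single k, Finset.sum_eq_single l]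
  · simp
  · intro b _ hb; simp [single_apply, hb.symm]
  · simp
  · intro a _ ha
    refine Finset.sum_eq_zero fun b _ => ?_
    simp [single_apply, ha.symm]
  · simp

lemma sum4_comm {α β γ δ : Type} [Fintype α] [Fintype β] [Fintype γ] [Fintype δ]
    (f : α → β → γ → δ → ℂ) :
    ∑ i, ∑ j, ∑ k, ∑ l, f i j k l = ∑ k, ∑ l, ∑ i, ∑ j, f i j k l := by
  have h := Finset.sum_comm (s := (Finset.univ : Finset (α × β)))
    (t := (Finset.univ : Finset (γ × δ))) (f := fun a b => f a.1 a.2 b.1 b.2)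
  simpa only [Fintype.sum_prod_type] using h

lemma sum3_comm {α γ δ : Type} [Fintype α] [Fintype γ] [Fintype δ]
    (f : α → γ → δ → ℂ) :
    ∑ i, ∑ k, ∑ l, f i k l = ∑ k, ∑ l, ∑ i, f i k l := by
  have h := Finset.sum_comm (s := (Finset.univ : Finset α))
    (t := (Finset.univ : Finset (γ × δ))) (f := fun a b => f a b.1 b.2)
  simpa only [Fintype.sum_prod_type] using h

lemma adj_pos {n r : ℕ} {H : Matrix (Fin n) (Fin n) ℂ →ₗ[ℂ] Matrix (Fin r) (Fin r) ℂ}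
    (hH : ∀ P : Matrix (Fin n) (Fin n) ℂ, P.PosSemidef → (H P).PosSemidef)
    (Y : Matrix (Fin r) (Fin r) ℂ) (hY : Y.PosSemidef) : (adj H Y).PosSemidef := by
  refine PosSemidef.of_dotProduct_mulVec_nonneg ?_ fun v => ?_
  · ext i j
    rw [conjTranspose_apply, adj_apply, adj_apply, star_sum, Finset.sum_comm]
    simp only [star_sum]
    rw [Finset.sum_comm, Finset.sum_comm]
    refine Finset.sum_congr rfl fun k _ => Finset.sum_congr rfl fun l _ => ?_
    rw [star_mul', hY.1.apply, ← conjTranspose_apply, map_conj hH, conjTranspose_single, star_one]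
  · obtain ⟨ι, _, _, S, -, -, hS, -⟩ := rank_fact hY
    have h1 := hH _ (posSemidef_vecMulVec_self_star (star v))
    have h2 : star v ⬝ᵥ adj H Y *ᵥ v =
        ∑ p, star (fun k => star (S k p)) ⬝ᵥ H (vecMulVec (star v) (star (star v))) *ᵥ
          (fun k => star (S k p)) := by
      have ha : star v ⬝ᵥ adj H Y *ᵥ v =
          ∑ k, ∑ l, Y k l * H (vecMulVec (star v) (star (star v))) k l := by
        simp only [dotProduct, mulVec, adj_apply, map_entry H (vecMulVec _ _), vecMulVec_apply,
          Pi.star_apply, star_star, Finset.mul_sum, Finset.sum_mul]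
        rw [sum4_comm]
        refine Finset.sum_congr rfl fun k _ => Finset.sum_congr rfl fun l _ =>
          Finset.sum_congr rfl fun i _ => Finset.sum_congr rfl fun j _ => ?_
        ring
      rw [ha]
      generalize H (vecMulVec (star v) (star (star v))) = Z
      simp only [dotProduct, mulVec, hS, Matrix.mul_apply, conjTranspose_apply, Pi.star_apply,
        star_star, Finset.mul_sum, Finset.sum_mul]
      rw [eq_comm, sum3_comm]
      refine Finset.sum_congr rfl fun k _ => Finset.sum_congr rfl fun l _ =>
          Finset.sum_congr rfl fun i _ => ?_
      ring
    rw [h2]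
    exact Finset.sum_nonneg fun p _ => h1.dotProduct_mulVec_nonneg _

lemma dec_of_adj {n r : ℕ} {H : Matrix (Fin n) (Fin n) ℂ →ₗ[ℂ] Matrix (Fin r) (Fin r) ℂ}
    (h : IsDecomposableMap (adj H)) : IsDecomposableMap H := by
  obtain ⟨N, V, W, h⟩ := coeff_of_dec h
  refine dec_of_coeff H (fun p => (V p)ᵀ) (fun p => (W p)ᴴ) ?_
  intro i j k l
  rw [← adj_single, h]
  congr 1
  refine Finset.sum_congr rfl fun p _ => ?_
  simp [mul_comm]

end Woro

theorem positive_map_decomposable_of_low_dimension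
    (n r : ℕ) (hn : 1 ≤ n) (hr : 1 ≤ r) (hdim : n * r ≤ 6 ∨ min n r = 1)
    (H : Matrix (Fin n) (Fin n) ℂ →ₗ[ℂ] Matrix (Fin r) (Fin r) ℂ)
    (hH : ∀ P : Matrix (Fin n) (Fin n) ℂ, P.PosSemidef → (H P).PosSemidef) :
    IsDecomposableMap H := by
  have hcases : n = 1 ∨ r = 1 ∨ (n = 2 ∧ r ≤ 3) ∨ (r = 2 ∧ n ≤ 3) := by
    by_cases h1 : n = 1
    · exact Or.inl h1
    by_cases h2 : r = 1
    · exact Or.inr (Or.inl h2)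
    rcases hdim with h | h
    · have hn3 : n ≤ 3 := by
        by_contra! hc
        have : 2 ≤ r := by omega
        nlinarith
      have hr3 : r ≤ 3 := by
        by_contra! hc
        have : 2 ≤ n := by omega
        nlinarith
      interval_cases n <;> interval_cases r <;> omega
    · omega
  rcases hcases with h | h | ⟨h, h'⟩ | ⟨h, h'⟩
  · subst h; exact Woro.dec_one H hH
  · subst h; exact Woro.dec_of_adj (Woro.dec_one _ (Woro.adj_pos hH))
  · subst h; exact Woro.dec_two h' H hH
  · subst h; exact Woro.dec_of_adj (Woro.dec_two h' _ (Woro.adj_pos hH))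
end

section
/- For all n, r ≥ 2 with n·r > 6, there exists a linear map H : Matrix (Fin n) (Fin n) ℂ →ₗ[ℂ] Matrix (Fin r) (Fin r) ℂ that maps every positive semidefinite matrix to a positive semidefinite matrix but is not decomposable. -/
open Matrix ComplexOrder

theorem emb {n r n' r' : ℕ} (hn : n ≤ n') (hr : r ≤ r')
    (h : ∃ H : Matrix (Fin n) (Fin n) ℂ →ₗ[ℂ] Matrix (Fin r) (Fin r) ℂ,
      (∀ P : Matrix (Fin n) (Fin n) ℂ, P.PosSemidef → (H P).PosSemidef) ∧
        ¬ IsDecomposableMap H) :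
    ∃ H : Matrix (Fin n') (Fin n') ℂ →ₗ[ℂ] Matrix (Fin r') (Fin r') ℂ,
      (∀ P : Matrix (Fin n') (Fin n') ℂ, P.PosSemidef → (H P).PosSemidef) ∧
        ¬ IsDecomposableMap H := by
  have key : ∀ {a b : ℕ}, a ≤ b → ∃ Q : Matrix (Fin b) (Fin a) ℂ, Qᴴ * Q = 1 ∧ Qᵀ = Qᴴ := by
    intro a b hab
    refine ⟨(1 : Matrix (Fin b) (Fin b) ℂ).submatrix id (Fin.castLE hab), ?_, ?_⟩
    · ext i j
      simp [Matrix.mul_apply, Matrix.one_apply, Fin.ext_iff]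
      by_cases hij : (i : ℕ) = j
      · rw [Finset.sum_eq_single (Fin.castLE hab i)] <;> simp [hij, Fin.ext_iff]
        intro x hx1 hx2 hx3
        omega
      · rw [if_neg hij]
        apply Finset.sum_eq_zero
        intro x _
        split_ifs <;> simp
        omega
    · ext i j
      simp [Matrix.one_apply]
  obtain ⟨Q, hQ, hQt⟩ := key hn
  obtain ⟨P, hP, hPt⟩ := key hr
  obtain ⟨H, hpos, hdec⟩ := h
  refine ⟨{ toFun := fun X => P * H (Qᴴ * X * Q) * Pᴴ
            map_add' := ?_
            map_smul' := ?_ }, ?_, ?_⟩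
  · intro X Y; simp [Matrix.mul_add, Matrix.add_mul]
  · intro c X; simp
  · intro X hX
    exact (hpos _ (hX.conjTranspose_mul_mul_same Q)).mul_mul_conjTranspose_same P
  · rintro ⟨N, V, W, h⟩
    refine hdec ⟨N, fun p => Qᴴ * V p * P, fun p => Qᴴ * W p * P, fun X => ?_⟩
    have hQc : Qᴴᵀ = Q := by rw [← hQt, Matrix.transpose_transpose]
    have h1 := congrArg (fun Z => Pᴴ * Z * P) (h (Q * X * Qᴴ))
    simp only [LinearMap.coe_mk, AddHom.coe_mk] at h1
    have h2 : Pᴴ * (P * H (Qᴴ * (Q * X * Qᴴ) * Q) * Pᴴ) * P = H X := by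
      have e1 : Qᴴ * (Q * X * Qᴴ) * Q = (Qᴴ * Q) * X * (Qᴴ * Q) := by simp only [Matrix.mul_assoc]
      rw [e1, hQ, Matrix.one_mul, Matrix.mul_one]
      have e2 : Pᴴ * (P * H X * Pᴴ) * P = (Pᴴ * P) * H X * (Pᴴ * P) := by
        simp only [Matrix.mul_assoc]
      rw [e2, hP, Matrix.one_mul, Matrix.mul_one]
    rw [h2] at h1
    rw [h1]
    simp only [Matrix.mul_add, Matrix.add_mul, Matrix.mul_sum, Matrix.sum_mul,
      Matrix.conjTranspose_mul, Matrix.transpose_mul, hQc, hQt, Matrix.conjTranspose_conjTranspose,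
      Matrix.mul_assoc]

theorem compactE {n r K : ℕ} (A B : Fin K → Fin n → Fin r → ℤ)
    (hedge : ∀ (x : Fin n → ℂ) (y : Fin r → ℂ),
      (∀ p, ∑ i, ∑ k, star (x i) * (A p i k : ℂ) * y k = 0) →
      (∀ p, ∑ i, ∑ k, x i * (B p i k : ℂ) * y k = 0) → x = 0 ∨ y = 0) :
    ∃ ε : ℝ, 0 < ε ∧ ∀ (x : Fin n → ℂ) (y : Fin r → ℂ),
      ε * ((∑ i, ‖x i‖ ^ 2) * (∑ k, ‖y k‖ ^ 2)) ≤
        ∑ p, ‖∑ i, ∑ k, star (x i) * (A p i k : ℂ) * y k‖ ^ 2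
        + ∑ p, ‖∑ i, ∑ k, x i * (B p i k : ℂ) * y k‖ ^ 2 := by
  let F : EuclideanSpace ℂ (Fin n) × EuclideanSpace ℂ (Fin r) → ℝ := fun z =>
        ∑ p, ‖∑ i, ∑ k, star (z.1 i) * (A p i k : ℂ) * z.2 k‖ ^ 2
        + ∑ p, ‖∑ i, ∑ k, z.1 i * (B p i k : ℂ) * z.2 k‖ ^ 2
  have hF : Continuous F := by fun_prop
  have hsc : ∀ (a b : ℝ) x y, F (a • x, b • y) = a ^ 2 * b ^ 2 * F (x, y) := by
    intro a b x y
    simp only [F, mul_add, Finset.mul_sum]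
    congr 1
    · refine Finset.sum_congr rfl fun p _ => ?_
      rw [← sq_abs a, ← sq_abs b, ← Real.norm_eq_abs, ← Real.norm_eq_abs, ← Complex.norm_real a,
        ← Complex.norm_real b, ← mul_pow,
        ← mul_pow, ← norm_mul, ← norm_mul]
      congr 2
      simp only [Finset.mul_sum]
      refine Finset.sum_congr rfl fun i _ => Finset.sum_congr rfl fun k _ => ?_
      simp
      ring
    · refine Finset.sum_congr rfl fun p _ => ?_
      rw [← sq_abs a, ← sq_abs b, ← Real.norm_eq_abs, ← Real.norm_eq_abs, ← Complex.norm_real a,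
        ← Complex.norm_real b, ← mul_pow,
        ← mul_pow, ← norm_mul, ← norm_mul]
      congr 2
      simp only [Finset.mul_sum]
      refine Finset.sum_congr rfl fun i _ => Finset.sum_congr rfl fun k _ => ?_
      simp
      ring
  have h0 : ∀ z, 0 ≤ F z := fun z => by positivity
  have hK : IsCompact ((Metric.sphere (0 : EuclideanSpace ℂ (Fin n)) 1) ×ˢ
      (Metric.sphere (0 : EuclideanSpace ℂ (Fin r)) 1)) :=
    (isCompact_sphere _ _).prod (isCompact_sphere _ _)
  have hpos : ∀ z ∈ ((Metric.sphere (0 : EuclideanSpace ℂ (Fin n)) 1) ×ˢ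
      (Metric.sphere (0 : EuclideanSpace ℂ (Fin r)) 1)), 0 < F z := by
    rintro ⟨x, y⟩ ⟨hx, hy⟩
    refine lt_of_le_of_ne (h0 _) fun h => ?_
    have h' := (add_eq_zero_iff_of_nonneg (by positivity) (by positivity)).1 h.symm
    have h1 := (Finset.sum_eq_zero_iff_of_nonneg (fun _ _ => by positivity)).1 h'.1
    have h2 := (Finset.sum_eq_zero_iff_of_nonneg (fun _ _ => by positivity)).1 h'.2
    rcases hedge x.ofLp y.ofLp (fun p => by simpa using h1 p (Finset.mem_univ _))
      (fun p => by simpa using h2 p (Finset.mem_univ _)) with hh | hh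
    · have : x = 0 := by ext i; simpa using congrFun hh i
      simp [this] at hx
    · have : y = 0 := by ext i; simpa using congrFun hh i
      simp [this] at hy
  have : ∃ ε : ℝ, 0 < ε ∧ ∀ z ∈ ((Metric.sphere (0 : EuclideanSpace ℂ (Fin n)) 1) ×ˢ
      (Metric.sphere (0 : EuclideanSpace ℂ (Fin r)) 1)), ε ≤ F z := by
    rcases Set.eq_empty_or_nonempty ((Metric.sphere (0 : EuclideanSpace ℂ (Fin n)) 1) ×ˢ
      (Metric.sphere (0 : EuclideanSpace ℂ (Fin r)) 1)) with he | hne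
    · exact ⟨1, one_pos, by rw [he]; simp⟩
    · obtain ⟨z, hz, hm⟩ := hK.exists_isMinOn hne hF.continuousOn
      exact ⟨F z, hpos z hz, fun w hw => hm hw⟩
  obtain ⟨ε, he, hm⟩ := this
  refine ⟨ε, he, fun x y => ?_⟩
  have e1 : ∑ i, ‖x i‖ ^ 2 = ‖WithLp.toLp 2 x‖ ^ 2 := by rw [EuclideanSpace.norm_sq_eq]
  have e2 : ∑ i, ‖y i‖ ^ 2 = ‖WithLp.toLp 2 y‖ ^ 2 := by rw [EuclideanSpace.norm_sq_eq]
  rw [e1, e2]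
  change _ ≤ F (WithLp.toLp 2 x, WithLp.toLp 2 y)
  generalize WithLp.toLp 2 x = u
  generalize WithLp.toLp 2 y = v
  by_cases hu : u = 0
  · simpa [hu] using h0 _
  by_cases hv : v = 0
  · simpa [hv] using h0 _
  have hu' := norm_pos_iff.2 hu
  have hv' := norm_pos_iff.2 hv
  have := hm (‖u‖⁻¹ • u, ‖v‖⁻¹ • v) (by
    constructor <;> simp [norm_smul, hu'.ne', hv'.ne'])
  rw [hsc] at this
  have h3 := mul_le_mul_of_nonneg_right this (show 0 ≤ ‖u‖ ^ 2 * ‖v‖ ^ 2 by positivity)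
  refine h3.trans (le_of_eq ?_)
  field_simp

theorem l1 {n r L : ℕ} (c : Fin L → ℕ) (U : Fin L → Fin n → Fin r → ℤ)
    (V : Matrix (Fin n) (Fin r) ℂ) :
    ∑ i, ∑ j, ∑ k, ∑ l, (∑ q, (c q : ℂ) * U q i k * U q j l) * (star (V i k) * V j l)
      = ∑ q, (c q : ℂ) * (star (∑ i, ∑ k, (U q i k : ℂ) * V i k) * ∑ i, ∑ k, (U q i k : ℂ) * V i k) := by
  have : ∀ q, star (∑ i, ∑ k, (U q i k : ℂ) * V i k) * ∑ i, ∑ k, (U q i k : ℂ) * V i k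
      = ∑ i, ∑ j, ∑ k, ∑ l, (U q i k : ℂ) * U q j l * (star (V i k) * V j l) := by
    intro q
    rw [star_sum, Finset.sum_mul_sum]
    refine Finset.sum_congr rfl fun i _ => Finset.sum_congr rfl fun j _ => ?_
    rw [star_sum, Finset.sum_mul_sum]
    refine Finset.sum_congr rfl fun k _ => Finset.sum_congr rfl fun l _ => ?_
    simp
    ring
  simp only [this, Finset.mul_sum, Finset.sum_mul]
  symm
  rw [Finset.sum_comm]
  refine Finset.sum_congr rfl fun i _ => ?_
  rw [Finset.sum_comm]
  refine Finset.sum_congr rfl fun j _ => ?_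
  rw [Finset.sum_comm]
  refine Finset.sum_congr rfl fun k _ => ?_
  rw [Finset.sum_comm]
  refine Finset.sum_congr rfl fun l _ => Finset.sum_congr rfl fun q _ => ?_
  ring

open scoped MatrixOrder Matrix.Norms.L2Operator in
theorem psd_decomp {n : ℕ} {P : Matrix (Fin n) (Fin n) ℂ} (h : P.PosSemidef) :
    ∃ x : Fin n → Fin n → ℂ, P = ∑ m, vecMulVec (x m) (star (x m)) := by
  obtain ⟨B, rfl⟩ := CStarAlgebra.nonneg_iff_eq_star_mul_self.mp h.nonneg
  refine ⟨fun m i => star (B m i), ?_⟩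
  ext i j
  simp [Matrix.mul_apply, Matrix.sum_apply, vecMulVec_apply, Matrix.star_eq_conjTranspose]

noncomputable def mapH {n r K : ℕ} (A B : Fin K → Matrix (Fin n) (Fin r) ℂ) (ε : ℝ) :
    Matrix (Fin n) (Fin n) ℂ →ₗ[ℂ] Matrix (Fin r) (Fin r) ℂ where
  toFun X := (∑ p, (A p)ᴴ * X * A p) + (∑ p, (B p)ᴴ * Xᵀ * B p) - ((ε : ℂ) * X.trace) • 1
  map_add' X Y := by
    simp only [Matrix.mul_add, Matrix.add_mul, Finset.sum_add_distrib, Matrix.trace_add,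
      Matrix.transpose_add, mul_add, add_smul]
    abel
  map_smul' c X := by
    simp only [Matrix.mul_smul, Matrix.smul_mul, ← Finset.smul_sum, Matrix.trace_smul,
      Matrix.transpose_smul, smul_eq_mul, RingHom.id_apply, smul_sub, smul_add, smul_smul]
    congr 2
    ring

theorem quad {r : ℕ} (a y : Fin r → ℂ) :
    star y ⬝ᵥ (vecMulVec a (star a) *ᵥ y) = ((‖star a ⬝ᵥ y‖ ^ 2 : ℝ) : ℂ) := by
  have : star y ⬝ᵥ a = star (star a ⬝ᵥ y) := by
    simp [dotProduct, mul_comm]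
  rw [vecMulVec_mulVec]
  simp only [dotProduct_smul, this]
  push_cast
  rw [op_smul_eq_mul, Complex.star_def, Complex.conj_mul']

theorem mapH_pos {n r K : ℕ} (A B : Fin K → Fin n → Fin r → ℤ) (ε : ℝ)
    (hε : ∀ (x : Fin n → ℂ) (y : Fin r → ℂ),
      ε * ((∑ i, ‖x i‖ ^ 2) * (∑ k, ‖y k‖ ^ 2)) ≤
        ∑ p, ‖∑ i, ∑ k, star (x i) * (A p i k : ℂ) * y k‖ ^ 2
        + ∑ p, ‖∑ i, ∑ k, x i * (B p i k : ℂ) * y k‖ ^ 2)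
    {P : Matrix (Fin n) (Fin n) ℂ} (h : P.PosSemidef) :
    (mapH (fun p => Matrix.of fun i k => (A p i k : ℂ))
      (fun p => Matrix.of fun i k => (B p i k : ℂ)) ε P).PosSemidef := by
  obtain ⟨x, rfl⟩ := psd_decomp h
  rw [map_sum]
  refine posSemidef_sum _ fun m _ => ?_
  generalize x m = u
  have e1 : ∀ M : Matrix (Fin n) (Fin r) ℂ, Mᴴ * vecMulVec u (star u) * M =
      vecMulVec (Mᴴ *ᵥ u) (star (Mᴴ *ᵥ u)) := by
    intro M
    rw [Matrix.mul_vecMulVec, Matrix.vecMulVec_mul, Matrix.star_mulVec,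
      Matrix.conjTranspose_conjTranspose]
  have e2 : ∀ M : Matrix (Fin n) (Fin r) ℂ, Mᴴ * (vecMulVec u (star u))ᵀ * M =
      vecMulVec (Mᴴ *ᵥ star u) (star (Mᴴ *ᵥ star u)) := by
    intro M
    rw [Matrix.transpose_vecMulVec, Matrix.mul_vecMulVec, Matrix.vecMulVec_mul, Matrix.star_mulVec,
      Matrix.conjTranspose_conjTranspose, star_star]
  have e3 : (vecMulVec u (star u)).trace = ((∑ i, ‖u i‖ ^ 2 : ℝ) : ℂ) := by
    simp [Matrix.trace, vecMulVec_apply, Complex.mul_conj']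
  have e4 : ∀ y : Fin r → ℂ, star y ⬝ᵥ y = ((∑ i, ‖y i‖ ^ 2 : ℝ) : ℂ) := by
    intro y
    simp [dotProduct, Complex.conj_mul']
  simp only [mapH, LinearMap.coe_mk, AddHom.coe_mk, e1, e2, e3]
  have herm : ∀ v : Fin r → ℂ, (vecMulVec v (star v)).IsHermitian := by
    intro v
    ext i j
    simp [vecMulVec_apply, mul_comm]
  refine .of_dotProduct_mulVec_nonneg ?_ fun y => ?_
  · refine ((IsHermitian.add ?_ ?_).sub ?_)
    · simp only [IsHermitian, conjTranspose_sum, (herm _).eq]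
    · simp only [IsHermitian, conjTranspose_sum, (herm _).eq]
    · rw [← Complex.ofReal_mul]
      simp only [IsHermitian, conjTranspose_smul, conjTranspose_one, Complex.star_def,
        Complex.conj_ofReal]
  · simp only [sub_mulVec, add_mulVec, sum_mulVec, dotProduct_sub, dotProduct_add, dotProduct_sum,
      quad, smul_mulVec, one_mulVec, dotProduct_smul, e4, smul_eq_mul]
    have f1 : ∀ p, star ((Matrix.of fun i k => (A p i k : ℂ))ᴴ *ᵥ u) ⬝ᵥ y
        = ∑ i, ∑ k, star (u i) * (A p i k : ℂ) * y k := by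
      intro p
      rw [Finset.sum_comm]
      simp [dotProduct, mulVec, Finset.mul_sum, mul_comm]
    have f2 : ∀ p, star ((Matrix.of fun i k => (B p i k : ℂ))ᴴ *ᵥ star u) ⬝ᵥ y
        = ∑ i, ∑ k, u i * (B p i k : ℂ) * y k := by
      intro p
      rw [Finset.sum_comm]
      simp [dotProduct, mulVec, Finset.mul_sum, mul_comm]
    simp only [f1, f2]
    have := hε u y
    rw [← sub_nonneg, ← mul_assoc] at this
    exact_mod_cast this

theorem core {n r K L : ℕ} (A B : Fin K → Fin n → Fin r → ℤ) (c c' : Fin L → ℕ)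
    (U U' : Fin L → Fin n → Fin r → ℤ)
    (hA : ∀ q p, ∑ i, ∑ k, U q i k * A p i k = 0)
    (hB : ∀ q p, ∑ i, ∑ k, U' q i k * B p i k = 0)
    (hR : ∀ i j k l, ∑ q, (c q : ℤ) * U q i k * U q j l = ∑ q, (c' q : ℤ) * U' q j k * U' q i l)
    (hpos : 0 < ∑ i, ∑ k, ∑ q, (c q : ℤ) * U q i k * U q i k)
    (hedge : ∀ (x : Fin n → ℂ) (y : Fin r → ℂ),
      (∀ p, ∑ i, ∑ k, star (x i) * (A p i k : ℂ) * y k = 0) →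
      (∀ p, ∑ i, ∑ k, x i * (B p i k : ℂ) * y k = 0) → x = 0 ∨ y = 0) :
    ∃ H : Matrix (Fin n) (Fin n) ℂ →ₗ[ℂ] Matrix (Fin r) (Fin r) ℂ,
      (∀ P : Matrix (Fin n) (Fin n) ℂ, P.PosSemidef → (H P).PosSemidef) ∧
        ¬ IsDecomposableMap H := by
  obtain ⟨ε, he, hε⟩ := compactE A B hedge
  refine ⟨_, fun P hP => mapH_pos A B ε hε hP, ?_⟩
  rintro ⟨N, V, W, h⟩
  let Lf : (Fin n → Fin n → Fin r → Fin r → ℂ) → ℂ := fun T =>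
    ∑ i, ∑ j, ∑ k, ∑ l, (∑ q, (c q : ℂ) * U q i k * U q j l) * T i j k l
  have Ladd : ∀ S T, Lf (S + T) = Lf S + Lf T := by
    intro S T; simp [Lf, mul_add, Finset.sum_add_distrib]
  have Lsub : ∀ S T, Lf (S - T) = Lf S - Lf T := by
    intro S T; simp [Lf, mul_sub, Finset.sum_sub_distrib]
  have Lz : Lf 0 = 0 := by simp [Lf]
  have Lsum : ∀ (M : ℕ) (S : Fin M → Fin n → Fin n → Fin r → Fin r → ℂ),
      Lf (∑ p, S p) = ∑ p, Lf (S p) := fun M S =>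
    map_sum (⟨⟨Lf, Lz⟩, Ladd⟩ : (Fin n → Fin n → Fin r → Fin r → ℂ) →+ ℂ) S Finset.univ
  let T1 : Matrix (Fin n) (Fin r) ℂ → Fin n → Fin n → Fin r → Fin r → ℂ :=
    fun V i j k l => (Vᴴ * single i j (1 : ℂ) * V) k l
  let T2 : Matrix (Fin n) (Fin r) ℂ → Fin n → Fin n → Fin r → Fin r → ℂ :=
    fun V i j k l => (Vᴴ * (single i j (1 : ℂ))ᵀ * V) k l
  have g1 : ∀ (V : Matrix (Fin n) (Fin r) ℂ) i j k l,
      (Vᴴ * single i j (1 : ℂ) * V) k l = star (V i k) * V j l := by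
    intro V i j k l
    rw [Matrix.mul_assoc, Matrix.mul_apply, Finset.sum_eq_single i]
    · simp
    · intro b _ hb
      simp [hb]
    · simp
  have L1 : ∀ V, Lf (T1 V) = ∑ q, (c q : ℂ) *
      (star (∑ i, ∑ k, (U q i k : ℂ) * V i k) * ∑ i, ∑ k, (U q i k : ℂ) * V i k) := by
    intro V
    rw [← l1]
    simp only [Lf, T1, g1]
  have L2 : ∀ V, Lf (T2 V) = ∑ q, (c' q : ℂ) *
      (star (∑ i, ∑ k, (U' q i k : ℂ) * V i k) * ∑ i, ∑ k, (U' q i k : ℂ) * V i k) := by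
    intro V
    rw [← l1]
    simp only [Lf, T2, transpose_single, g1]
    rw [Finset.sum_comm]
    refine Finset.sum_congr rfl fun i _ => Finset.sum_congr rfl fun j _ =>
      Finset.sum_congr rfl fun k _ => Finset.sum_congr rfl fun l _ => ?_
    congr 1
    exact_mod_cast hR j i k l
  have hnn : ∀ z : ℂ, 0 ≤ star z * z := fun z => star_mul_self_nonneg z
  have P1 : ∀ V, 0 ≤ Lf (T1 V) := fun V => by
    rw [L1]; exact Finset.sum_nonneg fun q _ => mul_nonneg (by positivity) (hnn _)
  have P2 : ∀ V, 0 ≤ Lf (T2 V) := fun V => by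
    rw [L2]; exact Finset.sum_nonneg fun q _ => mul_nonneg (by positivity) (hnn _)
  have Z1 : ∀ p, Lf (T1 (Matrix.of fun i k => (A p i k : ℂ))) = 0 := by
    intro p
    rw [L1]
    refine Finset.sum_eq_zero fun q _ => ?_
    have : ∑ i, ∑ k, (U q i k : ℂ) * (Matrix.of fun i k => (A p i k : ℂ)) i k = 0 := by
      simp only [Matrix.of_apply]
      exact_mod_cast hA q p
    rw [this]; simp
  have Z2 : ∀ p, Lf (T2 (Matrix.of fun i k => (B p i k : ℂ))) = 0 := by
    intro p
    rw [L2]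
    refine Finset.sum_eq_zero fun q _ => ?_
    have : ∑ i, ∑ k, (U' q i k : ℂ) * (Matrix.of fun i k => (B p i k : ℂ)) i k = 0 := by
      simp only [Matrix.of_apply]
      exact_mod_cast hB q p
    rw [this]; simp
  let T3 : Fin n → Fin n → Fin r → Fin r → ℂ := fun i j k l =>
    (((ε : ℂ) * (single i j (1 : ℂ)).trace) • (1 : Matrix (Fin r) (Fin r) ℂ)) k l
  have L3 : Lf T3 = ε * ((∑ i, ∑ k, ∑ q, (c q : ℤ) * U q i k * U q i k : ℤ) : ℂ) := by
    simp only [Lf, T3]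
    push_cast
    rw [Finset.mul_sum]
    refine Finset.sum_congr rfl fun i _ => ?_
    rw [Finset.sum_eq_single i]
    · rw [Finset.mul_sum]
      refine Finset.sum_congr rfl fun k _ => ?_
      rw [Finset.sum_eq_single k]
      · simp [mul_comm]
      · intro l _ hl
        simp [Matrix.one_apply_ne hl.symm]
      · simp
    · intro j _ hj
      simp [Matrix.trace_single_eq_of_ne _ _ _ hj.symm]
    · simp
  have key : (∑ p, T1 (Matrix.of fun i k => (A p i k : ℂ))) +
      (∑ p, T2 (Matrix.of fun i k => (B p i k : ℂ))) - T3 = (∑ p, T1 (V p)) + ∑ p, T2 (W p) := by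
    ext i j k l
    have := congrFun (congrFun (h (single i j 1)) k) l
    simp only [mapH, LinearMap.coe_mk, AddHom.coe_mk, Matrix.add_apply, Matrix.sub_apply,
      Matrix.sum_apply] at this
    simp only [Pi.add_apply, Pi.sub_apply, Finset.sum_apply]
    exact this
  have key2 := congrArg Lf key
  rw [Lsub, Ladd, Ladd, Lsum, Lsum, Lsum, Lsum, L3] at key2
  simp only [Z1, Z2, Finset.sum_const_zero, zero_add, zero_sub] at key2
  have hge : (0 : ℂ) ≤ (∑ p, Lf (T1 (V p))) + ∑ p, Lf (T2 (W p)) :=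
    add_nonneg (Finset.sum_nonneg fun _ _ => P1 _) (Finset.sum_nonneg fun _ _ => P2 _)
  rw [← key2] at hge
  have hlt : 0 < ε * ((∑ i, ∑ k, ∑ q, (c q : ℤ) * U q i k * U q i k : ℤ) : ℝ) :=
    mul_pos he (by exact_mod_cast hpos)
  have hge' : (0 : ℝ) ≤ -(ε * ((∑ i, ∑ k, ∑ q, (c q : ℤ) * U q i k * U q i k : ℤ) : ℝ)) := by
    exact_mod_cast hge
  linarith

theorem case33 : ∃ H : Matrix (Fin 3) (Fin 3) ℂ →ₗ[ℂ] Matrix (Fin 3) (Fin 3) ℂ,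
      (∀ P : Matrix (Fin 3) (Fin 3) ℂ, P.PosSemidef → (H P).PosSemidef) ∧
        ¬ IsDecomposableMap H := by
  refine core (K := 5) (L := 4)
    ![![![1, -1, 0], ![0, 0, 0], ![0, 0, 0]], ![![0, 0, 0], ![0, 0, 0], ![0, 1, -1]],
      ![![0, 0, 1], ![0, 0, -1], ![0, 0, 0]], ![![0, 0, 0], ![1, 0, 0], ![-1, 0, 0]],
      ![![1, 1, 1], ![1, 1, 1], ![1, 1, 1]]]
    (fun _ _ _ => 0) ![18, 18, 9, 1] ![18, 18, 9, 1]
    ![![![1, 1, 0], ![0, 0, 0], ![0, -1, -1]], ![![0, 0, 1], ![-1, 0, 1], ![-1, 0, 0]],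
      ![![1, 1, -1], ![-1, 0, -1], ![-1, 1, 1]], ![![1, 1, 1], ![1, -8, 1], ![1, 1, 1]]]
    ![![![1, 1, 0], ![0, 0, 0], ![0, -1, -1]], ![![0, 0, 1], ![-1, 0, 1], ![-1, 0, 0]],
      ![![1, 1, -1], ![-1, 0, -1], ![-1, 1, 1]], ![![1, 1, 1], ![1, -8, 1], ![1, 1, 1]]]
    (by decide) (by decide) (by decide) (by decide) ?_
  intro x y h _
  have h0 := h 0
  have h1 := h 1
  have h2 := h 2
  have h3 := h 3
  have h4 := h 4
  simp [Fin.sum_univ_three] at h0 h1 h2 h3 h4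
  have k0 : star (x 0) * (y 0 - y 1) = 0 := by
    simp only [star_add, star_sub, Complex.star_def]; linear_combination h0
  have k1 : star (x 2) * (y 1 - y 2) = 0 := by
    simp only [star_add, star_sub, Complex.star_def]; linear_combination h1
  have k2 : star (x 0 - x 1) * y 2 = 0 := by
    simp only [star_add, star_sub, Complex.star_def]; linear_combination h2
  have k3 : star (x 1 - x 2) * y 0 = 0 := by
    simp only [star_add, star_sub, Complex.star_def]; linear_combination h3
  have k4 : star (x 0 + x 1 + x 2) * (y 0 + y 1 + y 2) = 0 := by
    simp only [star_add, star_sub, Complex.star_def]; linear_combination h4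
  rw [mul_eq_zero, star_eq_zero] at k0 k1 k2 k3 k4
  have : (x 0 = 0 ∧ x 1 = 0 ∧ x 2 = 0) ∨ (y 0 = 0 ∧ y 1 = 0 ∧ y 2 = 0) := by grind
  rcases this with ⟨a, b, d⟩ | ⟨a, b, d⟩
  · left; ext i; fin_cases i <;> simpa
  · right; ext i; fin_cases i <;> simpa

theorem edge24 (a b y1 y2 y3 y4 : ℂ)
    (h1 : star b * y2 = star a * y1) (h2 : star b * y3 = star a * y2)
    (h3 : 2 * star b * y4 = 2 * star a * y3 + star b * y1)
    (h4 : 2 * b * y1 = 2 * a * y2 + b * y4) (h5 : b * y2 = a * y3) (h6 : b * y3 = a * y4) :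
    (a = 0 ∧ b = 0) ∨ (y1 = 0 ∧ y2 = 0 ∧ y3 = 0 ∧ y4 = 0) := by
  by_cases hb : b = 0
  · by_cases ha : a = 0
    · exact .inl ⟨ha, hb⟩
    · right
      have ha' : star a ≠ 0 := by simpa
      subst hb
      have e1 : y1 = 0 := mul_left_cancel₀ ha' (by rw [← h1]; simp)
      have e2 : y2 = 0 := mul_left_cancel₀ ha' (by rw [← h2]; simp)
      have e3 : y3 = 0 := mul_left_cancel₀ ha (by rw [← h5]; simp)
      have e4 : y4 = 0 := mul_left_cancel₀ ha (by rw [← h6]; simp)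
      exact ⟨e1, e2, e3, e4⟩
  · right
    obtain ⟨z, rfl⟩ : ∃ z, a = z * b := ⟨a / b, by field_simp⟩
    have hb' : star b ≠ 0 := by simpa
    rw [star_mul] at h1 h2 h3
    generalize star z = w at *
    have h1 := mul_left_cancel₀ hb' (h1.trans (mul_assoc _ _ _))
    have h2 := mul_left_cancel₀ hb' (h2.trans (mul_assoc _ _ _))
    have h3 : 2 * y4 = 2 * w * y3 + y1 := mul_left_cancel₀ hb' (by linear_combination h3)
    have h4 : 2 * y1 = 2 * z * y2 + y4 := mul_left_cancel₀ hb (by linear_combination h4)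
    have h5 : y2 = z * y3 := mul_left_cancel₀ hb (by linear_combination h5)
    have h6 : y3 = z * y4 := mul_left_cancel₀ hb (by linear_combination h6)
    have hy : y4 = 0 := by
      by_contra q4
      have hz : z * (w * z - 1) = 0 := by
        apply mul_left_cancel₀ q4
        linear_combination h6 - h2 - w * h5 - w * z * h6
      rcases mul_eq_zero.1 hz with hz | hz
      · subst hz
        apply q4
        have e3 : y3 = 0 := by rw [h6]; ring
        rw [e3] at h3
        linear_combination (2 / 3 : ℂ) * h3 + (1 / 3 : ℂ) * h4
      · apply q4
        linear_combination - h4 - 2 * z * h1 - 2 * y1 * hz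
    have e3 : y3 = 0 := by rw [h6, hy]; ring
    have e2 : y2 = 0 := by rw [h5, e3]; ring
    have e1 : y1 = 0 := by
      rw [hy, e2] at h4
      linear_combination (1 / 2 : ℂ) * h4
    exact ⟨e1, e2, e3, hy⟩

theorem case24 : ∃ H : Matrix (Fin 2) (Fin 2) ℂ →ₗ[ℂ] Matrix (Fin 4) (Fin 4) ℂ,
      (∀ P : Matrix (Fin 2) (Fin 2) ℂ, P.PosSemidef → (H P).PosSemidef) ∧
        ¬ IsDecomposableMap H := by
  refine core (K := 3) (L := 5)
    ![![![-1, 0, 0, 0], ![0, 1, 0, 0]], ![![0, -1, 0, 0], ![0, 0, 1, 0]],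
      ![![0, 0, -2, 0], ![-1, 0, 0, 2]]]
    ![![![0, -2, 0, 0], ![2, 0, 0, -1]], ![![0, 0, -1, 0], ![0, 1, 0, 0]],
      ![![0, 0, 0, -1], ![0, 0, 1, 0]]]
    ![3, 3, 3, 3, 1] ![3, 3, 3, 3, 1]
    ![![![1, 0, 0, 0], ![0, 1, 0, 0]], ![![0, 1, 0, 0], ![0, 0, 1, 0]],
      ![![0, 0, 1, 0], ![0, 0, 0, 1]], ![![0, 0, 0, 1], ![0, 0, 0, 0]],
      ![![0, 0, 0, 0], ![2, 0, 0, 1]]]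
    ![![![0, 1, 0, 0], ![1, 0, 0, 0]], ![![0, 0, 1, 0], ![0, 1, 0, 0]],
      ![![0, 0, 0, 1], ![0, 0, 1, 0]], ![![1, 0, 0, 0], ![0, 0, 0, 0]],
      ![![0, 0, 0, 0], ![1, 0, 0, 2]]]
    (by decide) (by decide) (by decide) (by decide) ?_
  intro x y h h'
  have h0 := h 0
  have h1 := h 1
  have h2 := h 2
  have h3 := h' 0
  have h4 := h' 1
  have h5 := h' 2
  simp [Fin.sum_univ_four] at h0 h1 h2 h3 h4 h5
  rcases edge24 (x 0) (x 1) (y 0) (y 1) (y 2) (y 3) (by simp; linear_combination h0)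
    (by simp; linear_combination h1) (by simp; linear_combination h2)
    (by linear_combination h3) (by linear_combination h4) (by linear_combination h5)
    with ⟨a, b⟩ | ⟨a, b, d, e⟩
  · left; ext i; fin_cases i <;> simpa
  · right; ext i; fin_cases i <;> simpa

theorem case42 : ∃ H : Matrix (Fin 4) (Fin 4) ℂ →ₗ[ℂ] Matrix (Fin 2) (Fin 2) ℂ,
      (∀ P : Matrix (Fin 4) (Fin 4) ℂ, P.PosSemidef → (H P).PosSemidef) ∧
        ¬ IsDecomposableMap H := by
  refine core (K := 3) (L := 5)
    ![![![-1, 0], ![0, 1], ![0, 0], ![0, 0]], ![![0, 0], ![-1, 0], ![0, 1], ![0, 0]],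
      ![![0, -1], ![0, 0], ![-2, 0], ![0, 2]]]
    ![![![0, 2], ![-2, 0], ![0, 0], ![0, -1]], ![![0, 0], ![0, 1], ![-1, 0], ![0, 0]],
      ![![0, 0], ![0, 0], ![0, 1], ![-1, 0]]]
    ![3, 3, 3, 3, 1] ![3, 3, 3, 3, 1]
    ![![![1, 0], ![0, 1], ![0, 0], ![0, 0]], ![![0, 0], ![1, 0], ![0, 1], ![0, 0]],
      ![![0, 0], ![0, 0], ![1, 0], ![0, 1]], ![![0, 0], ![0, 0], ![0, 0], ![1, 0]],
      ![![0, 2], ![0, 0], ![0, 0], ![0, 1]]]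
    ![![![0, 1], ![1, 0], ![0, 0], ![0, 0]], ![![0, 0], ![0, 1], ![1, 0], ![0, 0]],
      ![![0, 0], ![0, 0], ![0, 1], ![1, 0]], ![![1, 0], ![0, 0], ![0, 0], ![0, 0]],
      ![![0, 1], ![0, 0], ![0, 0], ![0, 2]]]
    (by decide) (by decide) (by decide) (by decide) ?_
  intro x y h h'
  have h0 := h 0
  have h1 := h 1
  have h2 := h 2
  have h3 := congrArg star (h' 0)
  have h4 := congrArg star (h' 1)
  have h5 := congrArg star (h' 2)
  simp [Fin.sum_univ_four] at h0 h1 h2 h3 h4 h5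
  rcases edge24 (star (y 0)) (star (y 1)) (star (x 0)) (star (x 1)) (star (x 2)) (star (x 3))
    (by simp; linear_combination h0)
    (by simp; linear_combination h1) (by simp; linear_combination h2)
    (by simp; linear_combination h3) (by simp; linear_combination h4)
    (by simp; linear_combination h5)
    with ⟨a, b⟩ | ⟨a, b, d, e⟩
  · rw [star_eq_zero] at a b
    right; ext i; fin_cases i <;> simpa
  · rw [star_eq_zero] at a b d e
    left; ext i; fin_cases i <;> simpa

theorem exists_positive_nondecomposable_map_of_high_dimension
    (n r : ℕ) (hn : 2 ≤ n) (hr : 2 ≤ r) (hdim : 6 < n * r) :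
    ∃ H : Matrix (Fin n) (Fin n) ℂ →ₗ[ℂ] Matrix (Fin r) (Fin r) ℂ,
      (∀ P : Matrix (Fin n) (Fin n) ℂ, P.PosSemidef → (H P).PosSemidef) ∧
        ¬ IsDecomposableMap H := by
  by_cases h4 : 4 ≤ n
  · exact emb h4 hr case42
  by_cases h4' : 4 ≤ r
  · exact emb hn h4' case24
  have : 3 ≤ n ∧ 3 ≤ r := by
    constructor
    · by_contra h
      have : n = 2 := by omega
      subst this; omega
    · by_contra h
      have : r = 2 := by omega
      subst this; omega
  exact emb this.1 this.2 case33
end
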